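/- arXiv:2007.15725 — 6 statements merged into one kernel-verified Lean document; each statement's English description precedes it below -/
import Mathlib

section
/- Suppose the family S = {S_i}_{i∈I} is closed under nonempty intersection. Then for each δ̄ ∈ Δ^{l,u} there exist a subset I* ⊆ I and pairwise disjoint subsets J_0 and {J_i : i ∈ I*} of J such that the convex hull of X^{l,u}(δ̄) equals the set of all z ∈ R^n satisfying: z_j = 0 for all j ∈ J_0; Σ_{j∈J_i} z_j ≥ 1 for all i ∈ I*; l ≤ Σ_{j∈J} z_j ≤ u; and 0 ≤ z_j ≤ 1 for all j ∈ J. -/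
open Finset

noncomputable section

def Xset (n m l u : ℕ) (S : Fin m → Finset (Fin n)) : Set ((Fin n → ℝ) × (Fin m → ℝ)) :=
  {zd | (∀ j, zd.1 j = 0 ∨ zd.1 j = 1) ∧ (∀ i, zd.2 i = 0 ∨ zd.2 i = 1) ∧
        (∀ i, zd.2 i = ∏ j ∈ S i, (1 - zd.1 j)) ∧
        (l : ℝ) ≤ ∑ j, zd.1 j ∧ ∑ j, zd.1 j ≤ (u : ℝ)}

def Dset (n m l u : ℕ) (S : Fin m → Finset (Fin n)) : Set (Fin m → ℝ) :=
  Prod.snd '' Xset n m l u S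

def Xfiber (n m l u : ℕ) (S : Fin m → Finset (Fin n)) (δ : Fin m → ℝ) :
    Set (Fin n → ℝ) :=
  {z | (z, δ) ∈ Xset n m l u S}

/-- The family is closed under nonempty intersection. -/
def ClosedInter (n m : ℕ) (S : Fin m → Finset (Fin n)) : Prop :=
  ∀ i j : Fin m, (S i ∩ S j).Nonempty → ∃ k, S i ∩ S j = S k

/-- The family is proper. -/
def ProperFam (n m l u : ℕ) (S : Fin m → Finset (Fin n)) : Prop :=
  ClosedInter n m S ∧
  ∃ D : Finset (Fin m → ℝ), (D : Set (Fin m → ℝ)) = Dset n m l u S ∧ D.card = m + 1 ∧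
    AffineIndependent ℝ (Subtype.val : {x : Fin m → ℝ // x ∈ D} → (Fin m → ℝ))

/-- `f x ≤ c` is valid and defines a facet of `conv P`. -/
def IsFacet {E : Type*} [AddCommGroup E] [Module ℝ E] (P : Set E) (f : E → ℝ) (c : ℝ) :
    Prop :=
  (∀ x ∈ P, f x ≤ c) ∧
  Module.finrank ℝ (affineSpan ℝ {x ∈ convexHull ℝ P | f x = c}).direction + 1 =
    Module.finrank ℝ (affineSpan ℝ P).direction

def SS (n m : ℕ) (S : Fin m → Finset (Fin n)) : ℕ → Finset (Fin n) :=
  fun k => if h : 1 ≤ k ∧ k ≤ m then S ⟨k - 1, by omega⟩ else if k = 0 then ∅ else Finset.univ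

def dd (m : ℕ) (δ : Fin m → ℝ) : ℕ → ℝ :=
  fun k => if h : 1 ≤ k ∧ k ≤ m then δ ⟨k - 1, by omega⟩ else if k = 0 then 1 else 0

def mixLeLHS (n m u : ℕ) (S : Fin m → Finset (Fin n)) (p : ℕ) (S' : Finset (Fin n))
    (zd : (Fin n → ℝ) × (Fin m → ℝ)) : ℝ :=
  ∑ j ∈ S', zd.1 j + ((u : ℝ) - ((S' \ SS n m S p).card : ℝ)) * dd m zd.2 p
    + ∑ i ∈ Finset.Icc (p + 1) m,
        (((S' \ SS n m S (i - 1)).card : ℝ) - ((S' \ SS n m S i).card : ℝ)) * dd m zd.2 i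

def MixLe (n m u : ℕ) (S : Fin m → Finset (Fin n)) (p : ℕ) (S' : Finset (Fin n))
    (zd : (Fin n → ℝ) × (Fin m → ℝ)) : Prop :=
  mixLeLHS n m u S p S' zd ≤ (u : ℝ)

def mixGeLHS (n m l : ℕ) (S : Fin m → Finset (Fin n)) (p : ℕ) (S' : Finset (Fin n))
    (zd : (Fin n → ℝ) × (Fin m → ℝ)) : ℝ :=
  (((S' ∪ SS n m S p).card : ℝ) - (n : ℝ) + (l : ℝ)) * dd m zd.2 p
    + ∑ i ∈ Finset.Icc (p + 1) m,
        (((S' ∪ SS n m S i).card : ℝ) - ((S' ∪ SS n m S (i - 1)).card : ℝ)) * dd m zd.2 i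
    - ∑ j ∈ S', zd.1 j

def MixGe (n m l : ℕ) (S : Fin m → Finset (Fin n)) (p : ℕ) (S' : Finset (Fin n))
    (zd : (Fin n → ℝ) × (Fin m → ℝ)) : Prop :=
  mixGeLHS n m l S p S' zd ≤ 0

def NestedLin (n m l u : ℕ) (S : Fin m → Finset (Fin n))
    (zd : (Fin n → ℝ) × (Fin m → ℝ)) : Prop :=
  ((l : ℝ) ≤ ∑ j, zd.1 j) ∧ (∑ j, zd.1 j ≤ (u : ℝ)) ∧
  (∀ i : Fin m, ∀ j ∈ S i, zd.1 j + zd.2 i ≤ 1) ∧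
  (1 ≤ dd m zd.2 1 + ∑ j ∈ SS n m S 1, zd.1 j) ∧
  (0 ≤ dd m zd.2 m) ∧
  (∀ j, 0 ≤ zd.1 j) ∧
  (∀ j, j ∉ SS n m S m → zd.1 j ≤ 1) ∧
  (∀ i : ℕ, 1 ≤ i → i + 1 ≤ m → dd m zd.2 (i + 1) ≤ dd m zd.2 i) ∧
  (∀ i : ℕ, 1 ≤ i → i + 1 ≤ m →
    dd m zd.2 i - dd m zd.2 (i + 1) ≤ ∑ j ∈ SS n m S (i + 1) \ SS n m S i, zd.1 j)

def FollowsPattern (n : ℕ) (α α' : Fin n → ℝ) : Prop :=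
  (∀ j, (0 ≤ α j → 0 ≤ α' j) ∧ (α j ≤ 0 → α' j ≤ 0)) ∧
  (∀ j₁ j₂ : Fin n, α j₂ ≤ α j₁ → α' j₂ ≤ α' j₁)

def IsFacetSet {E : Type*} [AddCommGroup E] [Module ℝ E] (P : Set E) (F : Set E) : Prop :=
  ∃ (f : E →ₗ[ℝ] ℝ) (c : ℝ), (∀ x ∈ P, f x ≤ c) ∧
    F = {x ∈ convexHull ℝ P | f x = c} ∧
    Module.finrank ℝ (affineSpan ℝ F).direction + 1 =
      Module.finrank ℝ (affineSpan ℝ P).direction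

/-!
Fixing `δ` fixes the zero coordinates `J₀`, the union of the `S i` with `δ i = 1`, and asks a binary
vector `z` to hit each remaining set `S i \ J₀` with `δ i = 0`. It is enough to hit the
inclusion-minimal ones, and closure under intersection makes these pairwise disjoint. The minimal
sets, the singletons and the whole ground set then form a laminar family, so the linear system has
integral extreme points: otherwise a non-integral extreme point could be moved both ways along a
direction preserving every integral sum of the family. Krein-Milman concludes.
-/

section ExtremePoints

open Topology

variable {E κ : Type*} [AddCommGroup E] [Module ℝ E]

lemma eq_zero_of_mem_extremePoints_of_eventually_add_smul_mem {P : Set E} {z d : E}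
    (hz : z ∈ P.extremePoints ℝ) (hd : ∀ᶠ ε in 𝓝 (0 : ℝ), z + ε • d ∈ P) : d = 0 := by
  have hneg : ∀ᶠ ε in 𝓝 (0 : ℝ), z + (-ε) • d ∈ P :=
    (continuous_neg.tendsto' (0 : ℝ) 0 neg_zero).eventually hd
  obtain ⟨ε, ⟨hplus, hminus⟩, hε⟩ :=
    (((hd.and hneg).filter_mono nhdsWithin_le_nhds).and
      (self_mem_nhdsWithin : Set.Ioi (0 : ℝ) ∈ 𝓝[>] 0)).exists
  have hmid : z ∈ openSegment ℝ (z + ε • d) (z + (-ε) • d) :=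
    ⟨1 / 2, 1 / 2, by norm_num, by norm_num, by norm_num, by module⟩
  have hεd : ε • d = 0 := add_eq_left.mp (hz.2 hplus hminus hmid)
  exact (smul_eq_zero.mp hεd).resolve_left (ne_of_gt hε)

lemma eq_zero_of_mem_extremePoints_setOf_forall_mem [Finite κ] {φ : κ → E →ₗ[ℝ] ℝ}
    {K : κ → Set ℝ} {z d : E} (hz : z ∈ Set.extremePoints ℝ {x | ∀ c, φ c x ∈ K c})
    (hd : ∀ c, φ c d = 0 ∨ K c ∈ 𝓝 (φ c z)) : d = 0 := by
  refine eq_zero_of_mem_extremePoints_of_eventually_add_smul_mem hz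
    (Filter.eventually_all.mpr fun c => ?_)
  simp only [map_add, map_smul, smul_eq_mul]
  rcases hd c with hc | hc
  · simpa only [hc, mul_zero, add_zero] using Filter.Eventually.of_forall fun _ => hz.1 c
  · have hcont : Continuous fun ε : ℝ => φ c z + ε * φ c d := by fun_prop
    exact (hcont.tendsto' 0 (φ c z) (by simp)).eventually hc

end ExtremePoints

section Laminar

variable {ι κ : Type*}

lemma exists_ne_notMem_of_sum_mem {M : Type*} [AddCommGroup M] {G : AddSubgroup M} {s : Finset ι}
    {f : ι → M} (hs : ∑ j ∈ s, f j ∈ G) {a : ι} (ha : a ∈ s) (hfa : f a ∉ G) :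
    ∃ b ∈ s, b ≠ a ∧ f b ∉ G := by
  classical
  by_contra! h
  have hrest : ∑ j ∈ s.erase a, f j ∈ G :=
    sum_mem fun j hj => h j (mem_of_mem_erase hj) (ne_of_mem_erase hj)
  rw [← add_sum_erase s f ha, add_mem_cancel_right hrest] at hs
  exact hfa hs

/-- A laminar family of finite sets: any two members are disjoint or nested. -/
def IsLaminar (A : κ → Finset ι) : Prop :=
  ∀ c c', Disjoint (A c) (A c') ∨ A c ⊆ A c' ∨ A c' ⊆ A c

-- Exchange two entries outside `G` in a minimal tight set; by laminarity every other tight set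
-- contains both of them or neither. Without tight sets through such entries, move one alone.
lemma IsLaminar.exists_ne_zero_forall_sum_eq_zero {A : κ → Finset ι} (hA : IsLaminar A)
    {M : Type*} [AddCommGroup M] {G : AddSubgroup M} {z : ι → M} {j : ι} (hj : z j ∉ G) :
    ∃ d : ι → ℝ, d ≠ 0 ∧ ∀ c, ∑ i ∈ A c, z i ∈ G → ∑ i ∈ A c, d i = 0 := by
  classical
  let Tight (B : Finset ι) : Prop := ∃ c, A c = B ∧ ∑ i ∈ B, z i ∈ G ∧ ∃ a ∈ B, z a ∉ G
  by_cases hT : ∃ B, Tight B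
  · obtain ⟨_, ⟨c, rfl, hc, a, ha, hza⟩, hmin⟩ := exists_minimal_of_wellFoundedLT Tight hT
    obtain ⟨b, hb, hba, hzb⟩ := exists_ne_notMem_of_sum_mem hc ha hza
    refine ⟨Pi.single a 1 - Pi.single b 1, fun h => ?_, fun c' hc' => ?_⟩
    · simpa [hba.symm] using congrFun h a
    have hsub : ∀ x ∈ A c, z x ∉ G → x ∈ A c' → A c ⊆ A c' := fun x hx hzx hx' => by
      rcases hA c c' with hdisj | hle | hge
      · exact absurd hx' (disjoint_left.mp hdisj hx)
      · exact hle
      · exact hmin ⟨c', rfl, hc', x, hx', hzx⟩ hge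
    have hiff : a ∈ A c' ↔ b ∈ A c' :=
      ⟨fun h => hsub a ha hza h hb, fun h => hsub b hb hzb h ha⟩
    simp [sum_sub_distrib, sum_pi_single', hiff]
  · refine ⟨Pi.single j 1, by simp, fun c hc => ?_⟩
    have hjc : j ∉ A c := fun h => hT ⟨A c, c, rfl, hc, j, h, hj⟩
    simp [sum_pi_single', hjc]

/-- The polyhedron cut out by the integer bounds `lo c ≤ ∑ j ∈ A c, z j ≤ hi c`. -/
def sumPolyhedron (A : κ → Finset ι) (lo hi : κ → ℤ) : Set (ι → ℝ) :=
  {z | ∀ c, ∑ j ∈ A c, z j ∈ Set.Icc (lo c : ℝ) (hi c)}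

lemma convex_sumPolyhedron (A : κ → Finset ι) (lo hi : κ → ℤ) :
    Convex ℝ (sumPolyhedron A lo hi) := by
  simp only [sumPolyhedron, Set.ofPred_forall]
  exact convex_iInter fun c => (convex_Icc _ _).is_linear_preimage
    ⟨fun x y => sum_add_distrib, fun a x => (mul_sum _ _ a).symm⟩

lemma isClosed_sumPolyhedron (A : κ → Finset ι) (lo hi : κ → ℤ) :
    IsClosed (sumPolyhedron A lo hi) := by
  simp only [sumPolyhedron, Set.ofPred_forall]
  exact isClosed_iInter fun c => isClosed_Icc.preimage (by fun_prop)

lemma IsLaminar.mem_range_intCast_of_mem_extremePoints [Finite κ] {A : κ → Finset ι}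
    (hA : IsLaminar A) {lo hi : κ → ℤ} {z : ι → ℝ}
    (hz : z ∈ (sumPolyhedron A lo hi).extremePoints ℝ) (j : ι) :
    z j ∈ Set.range ((↑) : ℤ → ℝ) := by
  by_contra hj
  obtain ⟨d, hd, hsum⟩ :=
    hA.exists_ne_zero_forall_sum_eq_zero (G := (Int.castAddHom ℝ).range) hj
  let φ (c : κ) : (ι → ℝ) →ₗ[ℝ] ℝ := ∑ i ∈ A c, LinearMap.proj i
  have hφ (c : κ) (x : ι → ℝ) : φ c x = ∑ i ∈ A c, x i := by simp [φ]
  have hzφ : z ∈ Set.extremePoints ℝ {x | ∀ c, φ c x ∈ Set.Icc (lo c : ℝ) (hi c)} := by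
    simp only [hφ]
    exact hz
  refine hd (eq_zero_of_mem_extremePoints_setOf_forall_mem hzφ fun c => ?_)
  simp only [hφ]
  refine or_iff_not_imp_left.mpr fun hdc => ?_
  have hfrac : ∀ k : ℤ, (k : ℝ) ≠ ∑ i ∈ A c, z i := fun k hk => hdc (hsum c ⟨k, hk⟩)
  have hzc := hz.1 c
  exact Icc_mem_nhds (hzc.1.lt_of_ne (hfrac _)) (hzc.2.lt_of_ne (hfrac _).symm)

lemma finite_inter_setOf_forall_mem_range_intCast [Finite ι] {s : Set (ι → ℝ)}
    (hs : Bornology.IsBounded s) : (s ∩ {z | ∀ j, z j ∈ Set.range ((↑) : ℤ → ℝ)}).Finite := by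
  cases nonempty_fintype ι
  have hemb := Topology.IsClosedEmbedding.piMap fun _ : ι => Int.isClosedEmbedding_coe_real
  have hfin := (hemb.isCompact_preimage hs.isCompact_closure).finite_of_discrete
  refine (hfin.image (Pi.map fun _ => ((↑) : ℤ → ℝ))).subset ?_
  rintro z ⟨hzs, hz⟩
  choose k hk using hz
  obtain rfl : Pi.map (fun _ => ((↑) : ℤ → ℝ)) k = z := funext hk
  exact ⟨k, subset_closure hzs, rfl⟩

theorem IsLaminar.convexHull_inter_setOf_forall_mem_range_intCast [Finite ι] [Finite κ]
    {A : κ → Finset ι} (hA : IsLaminar A) {lo hi : κ → ℤ}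
    (hbdd : Bornology.IsBounded (sumPolyhedron A lo hi)) :
    convexHull ℝ (sumPolyhedron A lo hi ∩ {z | ∀ j, z j ∈ Set.range ((↑) : ℤ → ℝ)}) =
      sumPolyhedron A lo hi := by
  cases nonempty_fintype ι
  have hconv := convex_sumPolyhedron A lo hi
  have hcomp := Metric.isCompact_of_isClosed_isBounded (isClosed_sumPolyhedron A lo hi) hbdd
  have hfin := finite_inter_setOf_forall_mem_range_intCast hbdd
  refine (convexHull_min Set.inter_subset_left hconv).antisymm ?_
  refine (closure_convexHull_extremePoints hcomp hconv).symm.subset.trans ?_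
  exact closure_minimal
    (convexHull_mono fun z hz => ⟨hz.1, hA.mem_range_intCast_of_mem_extremePoints hz⟩)
    (hfin.isClosed_convexHull ℝ)

end Laminar

section Blocks

variable {ι κ : Type*} [Fintype ι]

/-- The polytope of points of the unit cube that vanish on `J₀`, have sum at least `1` over each
block `T i` with `i ∈ I`, and satisfy the cardinality bounds `l` and `u`. -/
def blockPolytope (I : Finset κ) (J₀ : Finset ι) (T : κ → Finset ι) (l u : ℤ) : Set (ι → ℝ) :=
  {z | (∀ j ∈ J₀, z j = 0) ∧ (∀ i ∈ I, 1 ≤ ∑ j ∈ T i, z j) ∧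
    ((l : ℝ) ≤ ∑ j, z j ∧ ∑ j, z j ≤ (u : ℝ)) ∧ ∀ j, 0 ≤ z j ∧ z j ≤ 1}

/-- The sets on whose sums `blockPolytope` imposes bounds: the blocks, the singletons and the
whole ground set. -/
def blockSystem (I : Finset κ) (T : κ → Finset ι) : I ⊕ ι ⊕ Unit → Finset ι :=
  Sum.elim (fun i => T i) (Sum.elim singleton fun _ => univ)

lemma isLaminar_blockSystem {I : Finset κ} {T : κ → Finset ι}
    (hT : (I : Set κ).PairwiseDisjoint T) : IsLaminar (blockSystem I T) := by
  have hsingleton (j : ι) (B : Finset ι) : Disjoint {j} B ∨ {j} ⊆ B := by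
    simpa [or_comm] using em (j ∈ B)
  rintro (i | j | _) (i' | j' | _)
  · rcases eq_or_ne i i' with rfl | hne
    · exact Or.inr (Or.inl subset_rfl)
    · exact Or.inl (hT i.2 i'.2 (Subtype.coe_ne_coe.mpr hne))
  · exact (hsingleton j' (T i)).imp (fun h => h.symm) Or.inr
  · exact Or.inr (Or.inl (subset_univ _))
  · exact (hsingleton j (T i')).imp_right Or.inl
  · exact (hsingleton j {j'}).imp_right Or.inl
  all_goals simp [blockSystem]

open scoped Classical in
lemma blockPolytope_eq_sumPolyhedron (I : Finset κ) (J₀ : Finset ι) (T : κ → Finset ι) (l u : ℤ) :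
    blockPolytope I J₀ T l u = sumPolyhedron (blockSystem I T)
      (Sum.elim (fun _ => 1) (Sum.elim (fun _ => 0) fun _ => l))
      -- A block sum of a point of the unit cube is at most the size of the block.
      (Sum.elim (fun i => #(T i)) (Sum.elim (fun j => if j ∈ J₀ then 0 else 1) fun _ => u)) := by
  ext z
  simp only [blockPolytope, sumPolyhedron, blockSystem, Set.mem_ofPred_eq, Sum.forall,
    Sum.elim_inl, Sum.elim_inr, sum_singleton, Set.mem_Icc, Subtype.forall]
  push_cast
  constructor
  · rintro ⟨hzero, hblock, hcard, hcube⟩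
    refine ⟨fun i hi => ⟨hblock i hi, ?_⟩, fun j => ⟨(hcube j).1, ?_⟩, fun _ => hcard⟩
    · simpa using sum_le_card_nsmul (T i) z 1 fun j _ => (hcube j).2
    · split_ifs with hj
      exacts [(hzero j hj).le, (hcube j).2]
  · rintro ⟨hblock, hcube, hcard⟩
    refine ⟨fun j hj => ?_, fun i hi => (hblock i hi).1, hcard (), fun j => ⟨(hcube j).1, ?_⟩⟩
    · exact le_antisymm (by simpa [hj] using (hcube j).2) (hcube j).1
    · exact (hcube j).2.trans (by split_ifs <;> norm_num)

lemma isBounded_blockPolytope (I : Finset κ) (J₀ : Finset ι) (T : κ → Finset ι) (l u : ℤ) :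
    Bornology.IsBounded (blockPolytope I J₀ T l u) :=
  (Metric.isBounded_Icc (0 : ι → ℝ) 1).subset fun _ hz =>
    ⟨fun j => (hz.2.2.2 j).1, fun j => (hz.2.2.2 j).2⟩

lemma eq_zero_or_eq_one_iff_mem_range_intCast {x : ℝ} (h0 : 0 ≤ x) (h1 : x ≤ 1) :
    x = 0 ∨ x = 1 ↔ x ∈ Set.range ((↑) : ℤ → ℝ) := by
  constructor
  · rintro (rfl | rfl)
    exacts [⟨0, Int.cast_zero⟩, ⟨1, Int.cast_one⟩]
  · rintro ⟨k, rfl⟩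
    norm_cast at *
    omega

theorem convexHull_inter_binary_blockPolytope {I : Finset κ} (J₀ : Finset ι)
    {T : κ → Finset ι} (hT : (I : Set κ).PairwiseDisjoint T) (l u : ℤ) :
    convexHull ℝ (blockPolytope I J₀ T l u ∩ {z | ∀ j, z j = 0 ∨ z j = 1}) =
      blockPolytope I J₀ T l u := by
  have hbinary : blockPolytope I J₀ T l u ∩ {z | ∀ j, z j = 0 ∨ z j = 1} =
      blockPolytope I J₀ T l u ∩ {z | ∀ j, z j ∈ Set.range ((↑) : ℤ → ℝ)} :=
    Set.ext fun z => and_congr_right fun hz => forall_congr' fun j =>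
      eq_zero_or_eq_one_iff_mem_range_intCast (hz.2.2.2 j).1 (hz.2.2.2 j).2
  have hbdd := isBounded_blockPolytope I J₀ T l u
  rw [hbinary]
  rw [blockPolytope_eq_sumPolyhedron] at hbdd ⊢
  exact (isLaminar_blockSystem hT).convexHull_inter_setOf_forall_mem_range_intCast hbdd

end Blocks

lemma exists_pairwiseDisjoint_forall_exists_le {α κ : Type*} [SemilatticeInf α] [OrderBot α]
    [Finite α] (f : κ → α) (s : Set κ)
    (hf : ∀ i ∈ s, ∀ j ∈ s, ¬Disjoint (f i) (f j) → ∃ k ∈ s, f k ≤ f i ⊓ f j) :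
    ∃ t : Finset κ, ↑t ⊆ s ∧ (t : Set κ).PairwiseDisjoint f ∧ ∀ i ∈ s, ∃ k ∈ t, f k ≤ f i := by
  obtain ⟨t, hts, ht⟩ := Set.SurjOn.exists_bijOn_subset (f := f) (s := s)
    (t := {a | Minimal (· ∈ f '' s) a}) fun a ha => ha.prop
  lift t to Finset κ using ht.finite_iff_finite.mpr (Set.toFinite _)
  refine ⟨t, hts, fun i hi j hj hij => ?_, fun i hi => ?_⟩
  · change Disjoint (f i) (f j)
    by_contra hdisj
    obtain ⟨k, hk, hkij⟩ := hf i (hts hi) j (hts hj) hdisj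
    obtain ⟨hki, hkj⟩ := le_inf_iff.mp hkij
    have hki' : f k = f i := (ht.mapsTo hi).eq_of_le ⟨k, hk, rfl⟩ hki
    have hkj' : f k = f j := (ht.mapsTo hj).eq_of_le ⟨k, hk, rfl⟩ hkj
    exact hij (ht.injOn hi hj (hki'.symm.trans hkj'))
  · obtain ⟨b, hb, hmin⟩ := exists_minimal_le_of_wellFoundedLT (· ∈ f '' s) (f i) ⟨i, hi, rfl⟩
    obtain ⟨k, hk, rfl⟩ := ht.surjOn hmin
    exact ⟨k, hk, hb⟩

section Fiber

variable {ι κ : Type*} {S : κ → Finset ι} {δ : κ → ℝ} {z : ι → ℝ}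

lemma prod_one_sub_eq_one_iff (hz : ∀ j, z j = 0 ∨ z j = 1) {s : Finset ι} :
    ∏ j ∈ s, (1 - z j) = 1 ↔ ∀ j ∈ s, z j = 0 := by
  refine ⟨fun h j hj => (hz j).resolve_right fun h1 => ?_, fun h => ?_⟩
  · rw [prod_eq_zero hj (by rw [h1, sub_self])] at h
    exact zero_ne_one h
  · exact prod_eq_one fun j hj => by rw [h j hj, sub_zero]

lemma prod_one_sub_eq_zero_iff {s : Finset ι} :
    ∏ j ∈ s, (1 - z j) = 0 ↔ ∃ j ∈ s, z j = 1 := by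
  simp only [prod_eq_zero_iff, sub_eq_zero, eq_comm (a := (1 : ℝ))]

lemma one_le_sum_iff_exists_eq_one (hz : ∀ j, z j = 0 ∨ z j = 1) {s : Finset ι} :
    1 ≤ ∑ j ∈ s, z j ↔ ∃ j ∈ s, z j = 1 := by
  refine ⟨fun h => ?_, fun ⟨j, hj, hzj⟩ => ?_⟩
  · by_contra! hne
    rw [sum_eq_zero fun j hj => (hz j).resolve_right (hne j hj)] at h
    exact not_le_of_gt one_pos h
  · have hnonneg : ∀ i ∈ s, 0 ≤ z i := fun i _ => by rcases hz i with h | h <;> simp [h]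
    exact hzj ▸ single_le_sum hnonneg hj

variable [Fintype ι]

open scoped Classical in
/-- The set `J₀` of coordinates forced to vanish by the products that are equal to `1`. -/
def forcedZeros (S : κ → Finset ι) (δ : κ → ℝ) : Finset ι :=
  {j | ∃ i, δ i = 1 ∧ j ∈ S i}

lemma mem_forcedZeros {j : ι} : j ∈ forcedZeros S δ ↔ ∃ i, δ i = 1 ∧ j ∈ S i := by
  simp [forcedZeros]

variable [DecidableEq ι]

/-- The part of `S i` left free by `forcedZeros`; a product `δ i = 0` requires a one in it. -/
def freePart (S : κ → Finset ι) (δ : κ → ℝ) (i : κ) : Finset ι :=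
  S i \ forcedZeros S δ

lemma forall_eq_prod_one_sub_iff (hδ : ∀ i, δ i = 0 ∨ δ i = 1) (hz : ∀ j, z j = 0 ∨ z j = 1) :
    (∀ i, δ i = ∏ j ∈ S i, (1 - z j)) ↔
      (∀ j ∈ forcedZeros S δ, z j = 0) ∧ ∀ i, δ i = 0 → ∃ j ∈ freePart S δ i, z j = 1 := by
  constructor
  · intro h
    have hzero : ∀ j ∈ forcedZeros S δ, z j = 0 := fun j hj => by
      obtain ⟨i, hi, hji⟩ := mem_forcedZeros.mp hj
      exact (prod_one_sub_eq_one_iff hz).mp ((h i).symm.trans hi) j hji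
    refine ⟨hzero, fun i hi => ?_⟩
    obtain ⟨j, hj, hzj⟩ := prod_one_sub_eq_zero_iff.mp ((h i).symm.trans hi)
    exact ⟨j, mem_sdiff.mpr ⟨hj, fun hj₀ => zero_ne_one ((hzero j hj₀).symm.trans hzj)⟩, hzj⟩
  · rintro ⟨hzero, hhit⟩ i
    rcases hδ i with hi | hi
    · obtain ⟨j, hj, hzj⟩ := hhit i hi
      exact hi.trans (prod_one_sub_eq_zero_iff.mpr ⟨j, (mem_sdiff.mp hj).1, hzj⟩).symm
    · exact hi.trans ((prod_one_sub_eq_one_iff hz).mpr fun j hj =>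
        hzero j (mem_forcedZeros.mpr ⟨i, hi, hj⟩)).symm

lemma exists_freePart_subset_inter (hS : ∀ i j, (S i ∩ S j).Nonempty → ∃ k, S i ∩ S j = S k)
    (hδ : ∀ i, δ i = 0 ∨ δ i = 1) {i i' : κ}
    (hmeet : ¬Disjoint (freePart S δ i) (freePart S δ i')) :
    ∃ k, δ k = 0 ∧ freePart S δ k ⊆ freePart S δ i ∩ freePart S δ i' := by
  obtain ⟨j, hj, hj'⟩ := not_disjoint_iff.mp hmeet
  obtain ⟨hji, hj₀⟩ := mem_sdiff.mp hj
  have hjii' : j ∈ S i ∩ S i' := mem_inter.mpr ⟨hji, (mem_sdiff.mp hj').1⟩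
  obtain ⟨k, hk⟩ := hS i i' ⟨j, hjii'⟩
  refine ⟨k, (hδ k).resolve_right fun hk1 => hj₀ (mem_forcedZeros.mpr ⟨k, hk1, hk ▸ hjii'⟩), ?_⟩
  rw [freePart, ← hk]
  exact subset_inter (sdiff_subset_sdiff inter_subset_left subset_rfl)
    (sdiff_subset_sdiff inter_subset_right subset_rfl)

lemma fiber_eq_blockPolytope_inter_binary (hδ : ∀ i, δ i = 0 ∨ δ i = 1) {I : Finset κ}
    (hI : ∀ i ∈ I, δ i = 0)
    (hcover : ∀ i, δ i = 0 → ∃ k ∈ I, freePart S δ k ⊆ freePart S δ i) (l u : ℤ) :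
    {z : ι → ℝ | (∀ j, z j = 0 ∨ z j = 1) ∧ (∀ i, δ i = ∏ j ∈ S i, (1 - z j)) ∧
        (l : ℝ) ≤ ∑ j, z j ∧ ∑ j, z j ≤ (u : ℝ)} =
      blockPolytope I (forcedZeros S δ) (freePart S δ) l u ∩ {z | ∀ j, z j = 0 ∨ z j = 1} := by
  ext z
  suffices h : (∀ j, z j = 0 ∨ z j = 1) →
      ((∀ i, δ i = ∏ j ∈ S i, (1 - z j)) ↔
        (∀ j ∈ forcedZeros S δ, z j = 0) ∧ ∀ i ∈ I, 1 ≤ ∑ j ∈ freePart S δ i, z j) by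
    have hcube : (∀ j, z j = 0 ∨ z j = 1) → ∀ j, 0 ≤ z j ∧ z j ≤ 1 := fun hz j => by
      rcases hz j with h | h <;> simp [h]
    simp only [blockPolytope, Set.mem_inter_iff, Set.mem_ofPred_eq]
    tauto
  intro hz
  simp only [forall_eq_prod_one_sub_iff hδ hz, one_le_sum_iff_exists_eq_one hz]
  refine and_congr_right fun _ => ⟨fun h i hi => h i (hI i hi), fun h i hi => ?_⟩
  obtain ⟨k, hk, hki⟩ := hcover i hi
  obtain ⟨j, hj, hzj⟩ := h k hk
  exact ⟨j, hki hj, hzj⟩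

end Fiber

theorem stmt0_general {ι κ : Type*} [Fintype ι] [DecidableEq ι] (S : κ → Finset ι)
    (hS : ∀ i j, (S i ∩ S j).Nonempty → ∃ k, S i ∩ S j = S k)
    (l u : ℤ) (δ : κ → ℝ) (hδ : ∀ i, δ i = 0 ∨ δ i = 1) :
    ∃ (Istar : Finset κ) (J0 : Finset ι) (Jf : κ → Finset ι),
      (∀ i ∈ Istar, Disjoint J0 (Jf i)) ∧
      (∀ i ∈ Istar, ∀ i' ∈ Istar, i ≠ i' → Disjoint (Jf i) (Jf i')) ∧
      convexHull ℝ {z : ι → ℝ | (∀ j, z j = 0 ∨ z j = 1) ∧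
          (∀ i, δ i = ∏ j ∈ S i, (1 - z j)) ∧ (l : ℝ) ≤ ∑ j, z j ∧ ∑ j, z j ≤ (u : ℝ)} =
        {z : ι → ℝ |
          (∀ j ∈ J0, z j = 0) ∧
          (∀ i ∈ Istar, 1 ≤ ∑ j ∈ Jf i, z j) ∧
          ((l : ℝ) ≤ ∑ j, z j ∧ ∑ j, z j ≤ (u : ℝ)) ∧
          (∀ j, 0 ≤ z j ∧ z j ≤ 1)} := by
  obtain ⟨I, hI, hdisj, hcover⟩ :=
    exists_pairwiseDisjoint_forall_exists_le (freePart S δ) {i | δ i = 0}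
      fun i _ i' _ hmeet => exists_freePart_subset_inter hS hδ hmeet
  refine ⟨I, forcedZeros S δ, freePart S δ, fun i _ => disjoint_sdiff,
    fun i hi i' hi' => hdisj hi hi', ?_⟩
  rw [fiber_eq_blockPolytope_inter_binary hδ hI hcover]
  exact convexHull_inter_binary_blockPolytope _ hdisj l u

theorem stmt0 (n m l u : ℕ) (S : Fin m → Finset (Fin n))
    (hn : 0 < n) (hm : 0 < m) (hlu : l ≤ u) (hu : 2 ≤ u)
    (hdist : Function.Injective S)
    (hcard : ∀ i, 1 ≤ (S i).card ∧ (S i).card ≤ n - l)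
    (hinter : ClosedInter n m S)
    (δ : Fin m → ℝ) (hδ : δ ∈ Dset n m l u S) :
    ∃ (Istar : Finset (Fin m)) (J0 : Finset (Fin n)) (Jf : Fin m → Finset (Fin n)),
      (∀ i ∈ Istar, Disjoint J0 (Jf i)) ∧
      (∀ i ∈ Istar, ∀ i' ∈ Istar, i ≠ i' → Disjoint (Jf i) (Jf i')) ∧
      convexHull ℝ (Xfiber n m l u S δ) =
        {z : Fin n → ℝ |
          (∀ j ∈ J0, z j = 0) ∧
          (∀ i ∈ Istar, 1 ≤ ∑ j ∈ Jf i, z j) ∧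
          ((l : ℝ) ≤ ∑ j, z j ∧ ∑ j, z j ≤ (u : ℝ)) ∧
          (∀ j, 0 ≤ z j ∧ z j ≤ 1)} := by
  obtain ⟨⟨z₀, _⟩, ⟨-, hδ, -⟩, rfl⟩ := hδ
  simpa [Xfiber, Xset, hδ] using stmt0_general S hinter l u _ hδ
end
end

section
/- Suppose every S_i is nonempty, the family S = {S_i}_{i∈I} is closed under union (for all i, j ∈ I there exists k ∈ I with S_i ∪ S_j = S_k) and closed under nonempty intersection, and Δ^{l,u} = Δ^{0,n}. Then S is a proper family; in particular, Δ^{0,n} consists of exactly m+1 affinely independent vectors of R^m. -/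
open Finset

noncomputable section

/-!
A point of `Dset n m 0 n S` is determined by the zero set `Z` of a vector `z` it comes from: its
`i`-th coordinate is `1` exactly when `S i ⊆ Z`. If some `S i` lies in `Z`, closure under union
provides a largest such member `S k`, and `Z` may be replaced by `S k`; otherwise the point is `0`.
So the points are the origin and the `m` columns of the matrix `(S i ⊆ S k)`. As the `S i` are
distinct, this is the zeta matrix of a partial order, which is unitriangular along any linear
extension, so its columns are linearly independent.
-/

section LowerIndicator

variable {ι P : Type*} (K : Type*)

open scoped Classical in
/-- The `0`-`1` vector recording which members of the family `f` lie below `x`. For a family of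
finite sets ordered by inclusion it is the vector `δ` attached to a `0`-`1` vector with zero
set `x`; for `x = f k` it is a column of the zeta matrix of `f`. -/
def lowerIndicator [Zero K] [One K] [LE P] (f : ι → P) (x : P) : ι → K :=
  fun i => if f i ≤ x then 1 else 0

variable {K} {f : ι → P}

lemma lowerIndicator_of_le [Zero K] [One K] [LE P] {x : P} {i : ι} (h : f i ≤ x) :
    lowerIndicator K f x i = 1 :=
  if_pos h

lemma lowerIndicator_of_not_le [Zero K] [One K] [LE P] {x : P} {i : ι} (h : ¬ f i ≤ x) :
    lowerIndicator K f x i = 0 :=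
  if_neg h

lemma lowerIndicator_eq_zero_or_eq_one [Zero K] [One K] [LE P] (x : P) (i : ι) :
    lowerIndicator K f x i = 0 ∨ lowerIndicator K f x i = 1 :=
  (em (f i ≤ x)).symm.imp lowerIndicator_of_not_le lowerIndicator_of_le

lemma lowerIndicator_eq_zero [Zero K] [One K] [LE P] {x : P} (h : ∀ i, ¬ f i ≤ x) :
    lowerIndicator K f x = 0 :=
  funext fun i => lowerIndicator_of_not_le (h i)

lemma lowerIndicator_congr [Zero K] [One K] [LE P] {x y : P} (h : ∀ i, f i ≤ x ↔ f i ≤ y) :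
    lowerIndicator K f x = lowerIndicator K f y :=
  funext fun i => by classical exact if_congr (h i) rfl rfl

lemma linearIndependent_lowerIndicator [Ring K] [PartialOrder P] (hf : Function.Injective f) :
    LinearIndependent K fun k => lowerIndicator K f (f k) := by
  classical
  rw [linearIndependent_iff']
  intro s c hsum
  by_contra! hc
  obtain ⟨k₀, hk₀s, hk₀⟩ := hc
  obtain ⟨k, hk, hmax⟩ := ({k ∈ s | c k ≠ 0}).exists_maximalFor f ⟨k₀, by simp [hk₀s, hk₀]⟩
  obtain ⟨hks, hck⟩ := mem_filter.mp hk
  have eval_eq_coeff : (∑ k' ∈ s, c k' • lowerIndicator K f (f k')) k = c k := by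
    rw [Finset.sum_apply, sum_eq_single_of_mem k hks]
    · simp [lowerIndicator_of_le (le_refl (f k))]
    · intro k' hk's hne
      by_cases hle : f k ≤ f k'
      · have hck' : c k' = 0 := by
          by_contra hck'
          exact hne (hf ((hmax (mem_filter.mpr ⟨hk's, hck'⟩) hle).antisymm hle))
        simp [hck']
      · simp [lowerIndicator_of_not_le hle]
  exact hck (eval_eq_coeff.symm.trans (congrFun hsum k))

lemma exists_forall_le_iff_le_of_supClosed [Finite ι] [SemilatticeSup P]
    (hf : SupClosed (Set.range f)) {x : P} (hx : ∃ i, f i ≤ x) :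
    ∃ k, ∀ i, f i ≤ x ↔ f i ≤ f k := by
  classical
  have := Fintype.ofFinite ι
  have hne : ({i | f i ≤ x} : Finset ι).Nonempty := by simpa [Finset.Nonempty] using hx
  obtain ⟨k, hk⟩ := hf.finsetSup'_mem hne fun i _ => Set.mem_range_self i
  refine ⟨k, fun i => ⟨fun hi => ?_, fun hi => hi.trans ?_⟩⟩
  · exact hk ▸ le_sup' f (by simpa using hi)
  · exact hk ▸ sup'_le hne f (by simp)

lemma range_lowerIndicator [Zero K] [One K] [Finite ι] [SemilatticeSup P] [OrderBot P]
    (hf : SupClosed (Set.range f)) (hbot : ∀ i, f i ≠ ⊥) :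
    Set.range (lowerIndicator K f) = insert 0 (Set.range fun k => lowerIndicator K f (f k)) := by
  apply Set.Subset.antisymm
  · rintro _ ⟨x, rfl⟩
    by_cases hx : ∃ i, f i ≤ x
    · obtain ⟨k, hk⟩ := exists_forall_le_iff_le_of_supClosed hf hx
      exact .inr ⟨k, (lowerIndicator_congr hk).symm⟩
    · exact .inl (lowerIndicator_eq_zero (not_exists.mp hx))
  · rintro _ (rfl | ⟨k, rfl⟩)
    · exact ⟨⊥, lowerIndicator_eq_zero fun i hi => hbot i (le_bot_iff.mp hi)⟩
    · exact ⟨f k, rfl⟩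

end LowerIndicator

lemma affineIndependent_insert_zero_range {ι K V : Type*} [Ring K] [Nontrivial K]
    [AddCommGroup V] [Module K V] {v : ι → V} (hv : LinearIndependent K v) :
    AffineIndependent K (Subtype.val : ↥(insert 0 (Set.range v)) → V) := by
  have hne : ∀ w ∈ Set.range v, w ≠ 0 := by
    rintro _ ⟨i, rfl⟩
    exact hv.ne_zero i
  have h := (linearIndependent_set_iff_affineIndependent_vadd_union_singleton K hne (0 : V)).mp
    hv.linearIndepOn_id
  have hset : {(0 : V)} ∪ (· +ᵥ (0 : V)) '' Set.range v = insert 0 (Set.range v) := by simp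
  rwa [hset] at h

lemma exists_finset_affineIndependent_insert_zero_range {ι K V : Type*} [Fintype ι] [Ring K]
    [Nontrivial K] [AddCommGroup V] [Module K V] {v : ι → V} (hv : LinearIndependent K v) :
    ∃ D : Finset V, (D : Set V) = insert 0 (Set.range v) ∧ #D = Fintype.card ι + 1 ∧
      AffineIndependent K (Subtype.val : {x // x ∈ D} → V) := by
  classical
  have hcoe : ((insert 0 (univ.image v) : Finset V) : Set V) = insert 0 (Set.range v) := by simp
  have hzero : (0 : V) ∉ univ.image v := by simp [hv.ne_zero]
  refine ⟨insert 0 (univ.image v), hcoe, ?_, ?_⟩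
  · rw [card_insert_of_notMem hzero, card_image_of_injective _ hv.injective, card_univ]
  · have h := affineIndependent_insert_zero_range hv
    rwa [← hcoe] at h

theorem exists_finset_affineIndependent_range_lowerIndicator {ι P K : Type*} [Fintype ι]
    [SemilatticeSup P] [OrderBot P] [Ring K] [Nontrivial K] {f : ι → P}
    (hinj : Function.Injective f) (hsup : SupClosed (Set.range f)) (hbot : ∀ i, f i ≠ ⊥) :
    ∃ D : Finset (ι → K), (D : Set (ι → K)) = Set.range (lowerIndicator K f) ∧
      #D = Fintype.card ι + 1 ∧ AffineIndependent K (Subtype.val : {x // x ∈ D} → (ι → K)) := by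
  rw [range_lowerIndicator hsup hbot]
  exact exists_finset_affineIndependent_insert_zero_range (linearIndependent_lowerIndicator hinj)

lemma prod_one_sub_eq_lowerIndicator {ι α K : Type*} [Fintype α] [DecidableEq K] [CommRing K]
    (T : ι → Finset α) {z : α → K} (hz : ∀ j, z j = 0 ∨ z j = 1) (i : ι) :
    ∏ j ∈ T i, (1 - z j) = lowerIndicator K T (univ.filter (z · = 0)) i := by
  have hfactor (j : α) : 1 - z j = if z j = 0 then 1 else 0 := by
    rcases hz j with h | h <;> simp +contextual [h, eq_comm]
  simp [hfactor, prod_boole, lowerIndicator, subset_iff]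

section Dset

variable {n m : ℕ} {S : Fin m → Finset (Fin n)}

lemma mem_Xset_zero_self_iff {z : Fin n → ℝ} {δ : Fin m → ℝ} :
    (z, δ) ∈ Xset n m 0 n S ↔
      (∀ j, z j = 0 ∨ z j = 1) ∧ δ = lowerIndicator ℝ S (univ.filter (z · = 0)) := by
  constructor
  · rintro ⟨hz, -, hprod, -, -⟩
    exact ⟨hz, funext fun i => (hprod i).trans (prod_one_sub_eq_lowerIndicator S hz i)⟩
  · rintro ⟨hz, rfl⟩
    have hz_mem (j : Fin n) : 0 ≤ z j ∧ z j ≤ 1 := by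
      rcases hz j with h | h <;> simp [h]
    refine ⟨hz, lowerIndicator_eq_zero_or_eq_one _,
      fun i => (prod_one_sub_eq_lowerIndicator S hz i).symm, ?_, ?_⟩
    · simpa using sum_nonneg fun j _ => (hz_mem j).1
    · simpa using sum_le_sum fun j (_ : j ∈ univ) => (hz_mem j).2

lemma Dset_zero_self_eq_range : Dset n m 0 n S = Set.range (lowerIndicator ℝ S) := by
  apply Set.Subset.antisymm
  · rintro _ ⟨⟨z, δ⟩, hzδ, rfl⟩
    exact ⟨_, (mem_Xset_zero_self_iff.mp hzδ).2.symm⟩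
  · rintro _ ⟨Z, rfl⟩
    refine ⟨(fun j => if j ∈ Z then 0 else 1, lowerIndicator ℝ S Z),
      mem_Xset_zero_self_iff.mpr ⟨fun j => ?_, ?_⟩, rfl⟩
    · exact ite_eq_or_eq _ _ _
    · simp

end Dset

theorem stmt1 (n m l u : ℕ) (S : Fin m → Finset (Fin n))
    (hn : 0 < n) (hm : 0 < m) (hlu : l ≤ u) (hu : 2 ≤ u)
    (hdist : Function.Injective S)
    (hcard : ∀ i, 1 ≤ (S i).card ∧ (S i).card ≤ n - l)
    (hne : ∀ i, (S i).Nonempty)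
    (hunion : ∀ i j : Fin m, ∃ k, S i ∪ S j = S k)
    (hinter : ClosedInter n m S)
    (hD : Dset n m l u S = Dset n m 0 n S) :
    ProperFam n m l u S ∧
    ∃ D : Finset (Fin m → ℝ), (D : Set (Fin m → ℝ)) = Dset n m 0 n S ∧ D.card = m + 1 ∧
      AffineIndependent ℝ (Subtype.val : {x : Fin m → ℝ // x ∈ D} → (Fin m → ℝ)) := by
  have hsup : SupClosed (Set.range S) := by
    rintro _ ⟨i, rfl⟩ _ ⟨j, rfl⟩
    obtain ⟨k, hk⟩ := hunion i j
    exact ⟨k, hk.symm⟩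
  have hsimplex := exists_finset_affineIndependent_range_lowerIndicator (K := ℝ) hdist hsup
    fun i => (hne i).ne_empty
  rw [← Dset_zero_self_eq_range, Fintype.card_fin] at hsimplex
  exact ⟨⟨hinter, hD ▸ hsimplex⟩, hsimplex⟩
end
end

section
/- Assume S is a proper family. Let α ∈ R^n, β ∈ R^m, γ ∈ R be such that α·z + β·δ ≤ γ is valid for X^{l,u} and defines a facet F of conv(X^{l,u}). Then either (a) there exist β' ∈ R^m and γ' ∈ R such that β'·δ ≤ γ' is valid for Δ^{l,u}, defines a facet of conv(Δ^{l,u}), and F = {(z,δ) ∈ conv(X^{l,u}) : β'·δ = γ'}; or (b) for every δ̄ ∈ Δ^{l,u}, γ − β·δ̄ = max{α·z : z ∈ X^{l,u}(δ̄)}. -/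
open Finset

noncomputable section

/-!
Suppose the facet `F` misses the fibre of the projection over some vertex `δ₀`. The vertices of `F`
then project into `Δ ∖ {δ₀}`, and since `Δ` is the vertex set of a simplex, a hyperplane contains
`Δ ∖ {δ₀}` but not `δ₀`. That hyperplane cuts out a facet of `conv Δ`, and its preimage cuts out a
proper face of `conv X` that contains `F`. As `F` is a nonempty facet, the two faces coincide,
which is (a). If no fibre is missed, the bound is attained over every `δ`, which is (b).
-/

section Face

variable {E : Type*} [AddCommGroup E] [Module ℝ E] {P : Set E}

/-- The face of `conv P` cut out by the hyperplane `f x = c`. It is meant for inequalities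
`f x ≤ c` valid on `P`, but validity is not part of the definition. -/
def face (P : Set E) (f : E → ℝ) (c : ℝ) : Set E :=
  {x ∈ convexHull ℝ P | f x = c}

theorem IsFacet.finrank_direction_face_add_one {f : E → ℝ} {c : ℝ} (hf : IsFacet P f c) :
    Module.finrank ℝ (affineSpan ℝ (face P f c)).direction + 1 =
      Module.finrank ℝ (affineSpan ℝ P).direction :=
  hf.2

/-- `IsFacet` gives the empty face dimension `0`, so a strict inequality counts as facet-defining
when `P` spans a line. -/
theorem isFacet_iff_of_face_eq_empty {f : E → ℝ} {c : ℝ} (hempty : face P f c = ∅) :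
    IsFacet P f c ↔
      (∀ x ∈ P, f x ≤ c) ∧ Module.finrank ℝ (affineSpan ℝ P).direction = 1 := by
  change (_ ∧ Module.finrank ℝ (affineSpan ℝ (face P f c)).direction + 1 = _) ↔ _
  rw [hempty, AffineSubspace.span_empty, AffineSubspace.direction_bot, finrank_bot, zero_add,
    eq_comm]

theorem face_subset_convexHull {f : Module.Dual ℝ E} {c : ℝ} (hvalid : ∀ x ∈ P, f x ≤ c) :
    face P f c ⊆ convexHull ℝ {x ∈ P | f x = c} := by
  have hconv : Convex ℝ {x | f x ≤ c ∧ (f x = c → x ∈ convexHull ℝ {x ∈ P | f x = c})} := by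
    rw [convex_iff_forall_pos]
    rintro x ⟨hxc, hx⟩ y ⟨hyc, hy⟩ a b ha hb hab
    have hc : a * c + b * c = c := by rw [← add_mul, hab, one_mul]
    have hfxy : f (a • x + b • y) = a * f x + b * f y := by simp
    have hax : a * f x ≤ a * c := by gcongr
    have hby : b * f y ≤ b * c := by gcongr
    refine ⟨?_, fun h => ?_⟩
    · rw [hfxy, ← hc]
      exact add_le_add hax hby
    have hfx : f x = c := mul_left_cancel₀ ha.ne' (by linarith)
    have hfy : f y = c := mul_left_cancel₀ hb.ne' (by linarith)
    exact convex_convexHull ℝ _ (hx hfx) (hy hfy) ha.le hb.le hab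
  have hsub : P ⊆ {x | f x ≤ c ∧ (f x = c → x ∈ convexHull ℝ {x ∈ P | f x = c})} := fun y hy =>
    ⟨hvalid y hy, fun h => subset_convexHull ℝ _ ⟨hy, h⟩⟩
  exact fun x hx => (convexHull_min hsub hconv hx.1).2 hx.2

theorem dual_eq_of_mem_affineSpan {f : Module.Dual ℝ E} {c : ℝ} {A : Set E} (hA : ∀ x ∈ A, f x = c)
    {x : E} (hx : x ∈ affineSpan ℝ A) : f x = c :=
  AffineMap.eqOn_affineSpan (f := f.toAffineMap) (g := AffineMap.const ℝ E c) hA hx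

theorem finrank_direction_affineSpan_lt [FiniteDimensional ℝ E] {A B : Set E}
    (hA : A.Nonempty) (hAB : A ⊆ affineSpan ℝ B) {f : Module.Dual ℝ E} {c : ℝ}
    (hfA : ∀ x ∈ A, f x = c) {p : E} (hpB : p ∈ B) (hp : f p ≠ c) :
    Module.finrank ℝ (affineSpan ℝ A).direction < Module.finrank ℝ (affineSpan ℝ B).direction := by
  have hlt : affineSpan ℝ A < affineSpan ℝ B :=
    (affineSpan_le.2 hAB).lt_of_ne fun h =>
      hp (dual_eq_of_mem_affineSpan hfA (h ▸ subset_affineSpan ℝ B hpB))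
  exact Submodule.finrank_lt_finrank_of_lt
    (AffineSubspace.direction_lt_of_nonempty hlt (hA.affineSpan ℝ))

theorem finrank_direction_face_lt [FiniteDimensional ℝ E] {f : Module.Dual ℝ E} {c : ℝ}
    (hne : (face P f c).Nonempty) {p : E} (hpP : p ∈ P) (hp : f p ≠ c) :
    Module.finrank ℝ (affineSpan ℝ (face P f c)).direction <
      Module.finrank ℝ (affineSpan ℝ P).direction :=
  finrank_direction_affineSpan_lt hne (fun _ hx => convexHull_subset_affineSpan P hx.1)
    (fun _ hx => hx.2) hpP hp

theorem IsFacet.face_eq_of_subset [FiniteDimensional ℝ E] {f g : Module.Dual ℝ E} {c d : ℝ}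
    (hf : IsFacet P f c) (hne : (face P f c).Nonempty) (hsub : face P f c ⊆ face P g d)
    {p : E} (hpP : p ∈ P) (hp : g p ≠ d) : face P f c = face P g d := by
  refine hsub.antisymm fun x hx => ⟨hx.1, ?_⟩
  by_contra hxc
  have hfg := finrank_direction_affineSpan_lt hne (hsub.trans (subset_affineSpan ℝ _))
    (fun _ hy => hy.2) hx hxc
  have hgP := finrank_direction_face_lt (hne.mono hsub) hpP hp
  have hfP := hf.finrank_direction_face_add_one
  omega

theorem isFacet_of_forall_ne_eq [FiniteDimensional ℝ E] (hP : P.Nontrivial)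
    {f : Module.Dual ℝ E} {c : ℝ} {p : E} (hpP : p ∈ P) (hp : f p < c)
    (hf : ∀ q ∈ P, q ≠ p → f q = c) : IsFacet P f c := by
  have hvalid : ∀ q ∈ P, f q ≤ c := fun q hq => by
    rcases eq_or_ne q p with rfl | hqp
    exacts [hp.le, (hf q hq hqp).le]
  have hsub : P \ {p} ⊆ face P f c := fun q hq => ⟨subset_convexHull ℝ P hq.1, hf q hq.1 hq.2⟩
  obtain ⟨q, hq, hqp⟩ := hP.exists_ne p
  refine ⟨hvalid, le_antisymm (finrank_direction_face_lt ⟨q, hsub ⟨hq, hqp⟩⟩ hpP hp.ne) ?_⟩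
  calc Module.finrank ℝ (affineSpan ℝ P).direction
      = Module.finrank ℝ (vectorSpan ℝ (insert p (P \ {p}))) := by
        rw [direction_affineSpan, Set.insert_sdiff_self_of_mem hpP]
    _ ≤ Module.finrank ℝ (vectorSpan ℝ (P \ {p})) + 1 := finrank_vectorSpan_insert_le_set ℝ _ p
    _ ≤ Module.finrank ℝ (affineSpan ℝ (face P f c)).direction + 1 := by
        rw [direction_affineSpan]
        gcongr
        exact Submodule.finrank_mono (vectorSpan_mono ℝ hsub)

end Face

section Projection

variable {E W : Type*} [AddCommGroup E] [Module ℝ E] [AddCommGroup W] [Module ℝ W]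

theorem exists_dual_lt_of_notMem_affineSubspace {A : AffineSubspace ℝ W} {p : W} (hp : p ∉ A) :
    ∃ (g : Module.Dual ℝ W) (c : ℝ), g p < c ∧ ∀ q ∈ A, g q = c := by
  rcases (A : Set W).eq_empty_or_nonempty with hA | ⟨q₀, hq₀⟩
  · exact ⟨0, 1, zero_lt_one, fun q hq => (hA.subset hq).elim⟩
  have hdir : p -ᵥ q₀ ∉ A.direction := fun h =>
    hp ((AffineSubspace.vsub_right_mem_direction_iff_mem hq₀ p).1 h)
  obtain ⟨g, hg, hker⟩ := Submodule.exists_le_ker_of_notMem hdir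
  have hconst : ∀ q ∈ A, g q = g q₀ := fun q hq =>
    sub_eq_zero.1 (by simpa using hker (AffineSubspace.vsub_mem_direction hq hq₀))
  have hne : g p ≠ g q₀ := fun h => hg (by simp [h])
  rcases hne.lt_or_gt with hlt | hgt
  · exact ⟨g, g q₀, hlt, hconst⟩
  · exact ⟨-g, -g q₀, neg_lt_neg hgt, fun q hq => congrArg Neg.neg (hconst q hq)⟩

theorem exists_dual_lt_of_affineIndependent {D : Set W} (hD : AffineIndependent ℝ ((↑) : D → W))
    {d : W} (hd : d ∈ D) :
    ∃ (g : Module.Dual ℝ W) (c : ℝ), g d < c ∧ ∀ e ∈ D, e ≠ d → g e = c := by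
  obtain ⟨g, c, hgd, hg⟩ :=
    exists_dual_lt_of_notMem_affineSubspace (hD.notMem_affineSpan_sdiff ⟨d, hd⟩ Set.univ)
  refine ⟨g, c, hgd, fun e he hed => hg e (subset_affineSpan ℝ _ ⟨⟨e, he⟩, ?_, rfl⟩)⟩
  simpa using hed

variable [FiniteDimensional ℝ E]

theorem finrank_direction_affineSpan_image_le (π : E →ₗ[ℝ] W) (P : Set E) :
    Module.finrank ℝ (affineSpan ℝ (π '' P)).direction ≤
      Module.finrank ℝ (affineSpan ℝ P).direction := by
  have hmap : (affineSpan ℝ (π '' P)).direction = (affineSpan ℝ P).direction.map π := by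
    simp only [direction_affineSpan]
    exact (π.toAffineMap.map_vectorSpan).symm
  rw [hmap]
  exact Submodule.finrank_map_le π _

variable [FiniteDimensional ℝ W] {P : Set E} {π : E →ₗ[ℝ] W}

theorem IsFacet.isFacet_image_zero_one {f : E → ℝ} {c : ℝ} (hf : IsFacet P f c)
    (hempty : face P f c = ∅) (hnt : (π '' P).Nontrivial) :
    IsFacet (π '' P) (0 : Module.Dual ℝ W) 1 := by
  have hempty' : face (π '' P) (0 : Module.Dual ℝ W) 1 = ∅ := by simp [face]
  have hP := ((isFacet_iff_of_face_eq_empty hempty).1 hf).2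
  have hle := finrank_direction_affineSpan_image_le π P
  have hpos : Module.finrank ℝ (affineSpan ℝ (π '' P)).direction ≠ 0 := by
    rw [direction_affineSpan, Ne, Submodule.finrank_eq_zero, vectorSpan_eq_bot_iff_subsingleton]
    exact Set.not_subsingleton_iff.2 hnt
  exact (isFacet_iff_of_face_eq_empty hempty').2 ⟨fun _ _ => zero_le_one, by omega⟩

theorem IsFacet.exists_isFacet_image {f : Module.Dual ℝ E} {c : ℝ} (hf : IsFacet P f c)
    (hind : AffineIndependent ℝ ((↑) : π '' P → W)) (hnt : (π '' P).Nontrivial) {d : W}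
    (hd : d ∈ π '' P) (hmiss : ∀ x ∈ P, π x = d → f x ≠ c) :
    ∃ (g : Module.Dual ℝ W) (c' : ℝ),
      IsFacet (π '' P) g c' ∧ face P f c = face P (g ∘ₗ π) c' := by
  rcases (face P f c).eq_empty_or_nonempty with hempty | hne
  · refine ⟨0, 1, hf.isFacet_image_zero_one hempty hnt, ?_⟩
    rw [hempty]
    simp [face]
  obtain ⟨g, c', hgd, hg⟩ := exists_dual_lt_of_affineIndependent hind hd
  refine ⟨g, c', isFacet_of_forall_ne_eq hnt hd hgd hg, ?_⟩
  have hvertices : {x ∈ P | f x = c} ⊆ {x | (g ∘ₗ π) x = c'} := fun x hx =>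
    hg (π x) (Set.mem_image_of_mem π hx.1) fun hxd => hmiss x hx.1 hxd hx.2
  have hsub : face P f c ⊆ face P (g ∘ₗ π) c' := fun x hx =>
    ⟨hx.1, convexHull_min hvertices (convex_hyperplane (g ∘ₗ π).isLinear c')
      (face_subset_convexHull hf.1 hx)⟩
  obtain ⟨p, hpP, rfl⟩ := hd
  exact hf.face_eq_of_subset hne hsub hpP hgd.ne

theorem stmt2_general {P : Set (E × W)} (hind : AffineIndependent ℝ ((↑) : Prod.snd '' P → W))
    (hnt : (Prod.snd '' P).Nontrivial) (a : Module.Dual ℝ E) (b : Module.Dual ℝ W) (c : ℝ)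
    (hfacet : IsFacet P (fun x => a x.1 + b x.2) c) :
    (∃ (b' : Module.Dual ℝ W) (c' : ℝ), IsFacet (Prod.snd '' P) b' c' ∧
      {x ∈ convexHull ℝ P | a x.1 + b x.2 = c} = {x ∈ convexHull ℝ P | b' x.2 = c'}) ∨
    (∀ δ ∈ Prod.snd '' P, IsGreatest (a '' {z | (z, δ) ∈ P}) (c - b δ)) := by
  by_cases hmeet : ∀ δ ∈ Prod.snd '' P, ∃ x ∈ P, x.2 = δ ∧ a x.1 + b x.2 = c
  · refine Or.inr fun δ hδ => ⟨?_, ?_⟩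
    · obtain ⟨⟨z, _⟩, hz, rfl, hzc⟩ := hmeet δ hδ
      exact ⟨z, hz, eq_sub_of_add_eq hzc⟩
    · rintro _ ⟨z, hz, rfl⟩
      exact le_sub_iff_add_le.2 (hfacet.1 (z, δ) hz)
  · push Not at hmeet
    obtain ⟨d, hd, hmiss⟩ := hmeet
    exact Or.inl (IsFacet.exists_isFacet_image (f := a.coprod b) (π := LinearMap.snd ℝ E W)
      hfacet hind hnt hd hmiss)

end Projection

section ProperFam

variable {n m l u : ℕ} {S : Fin m → Finset (Fin n)}

theorem ProperFam.affineIndependent (h : ProperFam n m l u S) :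
    AffineIndependent ℝ ((↑) : Dset n m l u S → Fin m → ℝ) := by
  obtain ⟨-, D, hD, -, hind⟩ := h
  rw [← hD]
  exact hind

theorem ProperFam.nontrivial_Dset (h : ProperFam n m l u S) (hm : 0 < m) :
    (Dset n m l u S).Nontrivial := by
  obtain ⟨-, D, hD, hcard, -⟩ := h
  rw [← hD]
  exact Finset.one_lt_card_iff_nontrivial.1 (by omega)

end ProperFam

theorem stmt2 (n m l u : ℕ) (S : Fin m → Finset (Fin n))
    (hn : 0 < n) (hm : 0 < m) (hlu : l ≤ u) (hu : 2 ≤ u)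
    (hdist : Function.Injective S)
    (hcard : ∀ i, 1 ≤ (S i).card ∧ (S i).card ≤ n - l)
    (hproper : ProperFam n m l u S)
    (α : Fin n → ℝ) (β : Fin m → ℝ) (γ : ℝ)
    (hfacet : IsFacet (Xset n m l u S)
      (fun zd => ∑ j, α j * zd.1 j + ∑ i, β i * zd.2 i) γ) :
    (∃ (β' : Fin m → ℝ) (γ' : ℝ),
        IsFacet (Dset n m l u S) (fun d => ∑ i, β' i * d i) γ' ∧
        {x ∈ convexHull ℝ (Xset n m l u S) |
            ∑ j, α j * x.1 j + ∑ i, β i * x.2 i = γ} =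
          {x ∈ convexHull ℝ (Xset n m l u S) | ∑ i, β' i * x.2 i = γ'}) ∨
    (∀ δ ∈ Dset n m l u S,
        IsGreatest ((fun z => ∑ j, α j * z j) '' Xfiber n m l u S δ)
          (γ - ∑ i, β i * δ i)) := by
  exact (stmt2_general hproper.affineIndependent (hproper.nontrivial_Dset hm)
    (dotProductEquiv ℝ _ α) (dotProductEquiv ℝ _ β) γ hfacet).imp_left
      (dotProductEquiv ℝ (Fin m)).surjective.exists.1
end
end

section
/- Assume S is a proper family and fix an enumeration Δ^{l,u} = {δ^1,…,δ^{m+1}}. Suppose (α, β, γ) ∈ R^n × R^m × R satisfies γ − β·δ̄ = max{α·z : z ∈ X^{l,u}(δ̄)} for every δ̄ ∈ Δ^{l,u}. If α⁺, α⁻ ∈ R^n both follow the pattern of α and α = λα⁺ + μα⁻ for some λ ≥ 0 and μ ≥ 0, then ν_α = λ·ν_{α⁺} + μ·ν_{α⁻}. -/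
open Finset

noncomputable section

/-!
Identify the points of a fiber with the sets `T` they indicate: `T` avoids every `S i` with
`δ i = 1`, meets every other `S i`, and `l ≤ #T ≤ u`. Because `S` is closed under nonempty
intersection, any two such sets `T ≠ T'` can be moved towards each other by exchanging at most one
element of `T \ T'` against at most one element of `T' \ T`. If `T` maximizes `a`, applying the
exchange to `T` gives an inequality between two entries of `a`, or fixes the sign of one entry; any
`b` following the pattern of `a` satisfies the same inequality, so applying the exchange to `T'`
does not decrease `b`, and by induction `T` maximizes `b`. One set `T` therefore attains the maxima
of `α`, `αp` and `αm` simultaneously, and its value is linear in the objective.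
-/

section Exchange

variable {V : Type*} [DecidableEq V]

/-- A simultaneous exchange property for set families, as for generalized matroids but asserting
only that some exchange exists. The sets `X` and `Y`, of at most one element each, are traded
between `T` and `T'`; allowing one of them to be empty covers pure deletions and insertions. This
is what lets a set satisfying the local optimality conditions be compared with any other set. -/
def HasSymmetricExchange (𝓕 : Set (Finset V)) : Prop :=
  ∀ T ∈ 𝓕, ∀ T' ∈ 𝓕, T ≠ T' → ∃ X ⊆ T \ T', ∃ Y ⊆ T' \ T, #X ≤ 1 ∧ #Y ≤ 1 ∧
    (X ∪ Y).Nonempty ∧ T \ X ∪ Y ∈ 𝓕 ∧ T' \ Y ∪ X ∈ 𝓕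

theorem sum_sdiff_union {M : Type*} [AddCommGroup M] (f : V → M) {T X Y : Finset V}
    (hX : X ⊆ T) (hY : Disjoint T Y) :
    ∑ j ∈ T \ X ∪ Y, f j = ∑ j ∈ T, f j - ∑ j ∈ X, f j + ∑ j ∈ Y, f j := by
  rw [sum_union (hY.mono_left sdiff_subset), sum_sdiff_eq_sub hX]

theorem symmDiff_exchange_ssubset {T T' X Y : Finset V} (hX : X ⊆ T \ T') (hY : Y ⊆ T' \ T)
    (hne : (X ∪ Y).Nonempty) : symmDiff T (T' \ Y ∪ X) ⊂ symmDiff T T' := by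
  obtain ⟨v, hv⟩ := hne
  refine (Finset.ssubset_iff_of_subset fun w hw => ?_).2 ⟨v, ?_, ?_⟩ <;>
    grind [mem_symmDiff]

/-- The sets that avoid `S i` for `i ∈ Z`, meet `S i` for `i ∉ Z`, and have between `l` and `u`
elements. With `Z = {i | δ i = 1}` they are the supports of the points of `Xfiber n m l u S δ`. -/
structure IsFeasible {ι : Type*} (S : ι → Finset V) (Z : Set ι) (l u : ℕ) (T : Finset V) :
    Prop where
  disjoint : ∀ i ∈ Z, Disjoint (S i) T
  meets : ∀ i ∉ Z, (S i ∩ T).Nonempty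
  le_card : l ≤ #T
  card_le : #T ≤ u

/-- `S i` is a set to be met whose only element in `T` is `x`, so that `x` cannot leave `T`
without another element of `S i` entering. -/
def IsPrivate {ι : Type*} (S : ι → Finset V) (Z : Set ι) (T : Finset V) (x : V) (i : ι) : Prop :=
  i ∉ Z ∧ S i ∩ T = {x}

namespace IsFeasible

variable {ι : Type*} {S : ι → Finset V} {Z : Set ι} {l u : ℕ} {T T' : Finset V} {x y : V}

theorem of_subset_of_subset {U : Finset V} (hT : IsFeasible S Z l u T)
    (hT' : IsFeasible S Z l u T') (hTU : T ⊆ U) (hUT' : U ⊆ T') : IsFeasible S Z l u U where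
  disjoint i hi := (hT'.disjoint i hi).mono_right hUT'
  meets i hi := (hT.meets i hi).mono (inter_subset_inter_left hTU)
  le_card := hT.le_card.trans (card_le_card hTU)
  card_le := (card_le_card hUT').trans hT'.card_le

theorem index_notMem_of_mem (hT : IsFeasible S Z l u T) (hx : x ∈ T) {i : ι} (hxi : x ∈ S i) :
    i ∉ Z :=
  fun hi => disjoint_left.1 (hT.disjoint i hi) hxi hx

theorem swap (hT : IsFeasible S Z l u T) (hT' : IsFeasible S Z l u T') (hx : x ∈ T)
    (hy : y ∈ T' \ T) (hxy : ∀ i, IsPrivate S Z T x i → y ∈ S i) :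
    IsFeasible S Z l u (T \ {x} ∪ {y}) := by
  obtain ⟨hyT', hyT⟩ := mem_sdiff.1 hy
  have hcard : #(T \ {x} ∪ {y}) = #T := by
    rw [card_union_of_disjoint (by simp [hyT]), card_singleton,
      card_sdiff_of_subset (by simpa using hx), card_singleton,
      Nat.sub_add_cancel (card_pos.2 ⟨x, hx⟩)]
  refine ⟨fun i hi => ?_, fun i hi => ?_, hcard ▸ hT.le_card, hcard ▸ hT.card_le⟩
  · exact disjoint_union_right.2 ⟨(hT.disjoint i hi).mono_right sdiff_subset,
      disjoint_singleton_right.2 fun hyi => hT'.index_notMem_of_mem hyT' hyi hi⟩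
  · by_cases hpriv : S i ∩ T = {x}
    · exact ⟨y, by simp [hxy i ⟨hi, hpriv⟩]⟩
    · obtain ⟨j, hj, hjx⟩ := not_subset.1 (mt (hT.meets i hi).subset_singleton_iff.1 hpriv)
      exact ⟨j, by grind⟩

/-- The swap partner `y` is taken from an inclusion-minimal private set of `x`: by minimality every
other private set of `x` contains this one, hence `y`. -/
theorem exists_swap_of_isPrivate
    (hS : ∀ i j, (S i ∩ S j).Nonempty → ∃ k, S i ∩ S j = S k)
    (hT : IsFeasible S Z l u T) (hT' : IsFeasible S Z l u T') (hx : x ∈ T \ T')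
    (hpriv : ∃ i, IsPrivate S Z T x i) :
    ∃ y ∈ T' \ T, IsFeasible S Z l u (T \ {x} ∪ {y}) ∧ IsFeasible S Z l u (T' \ {y} ∪ {x}) := by
  obtain ⟨hxT, hxT'⟩ := mem_sdiff.1 hx
  obtain ⟨i, ⟨hiZ, hi⟩, hmin⟩ := exists_minimalFor_of_wellFoundedLT (IsPrivate S Z T x) S hpriv
  have eq_x {j : V} (hj : j ∈ S i) (hjT : j ∈ T) : j = x :=
    mem_singleton.1 (hi ▸ mem_inter.2 ⟨hj, hjT⟩)
  have hxi : x ∈ S i := (mem_inter.1 (hi ▸ mem_singleton_self x)).1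
  obtain ⟨y, hy⟩ := hT'.meets i hiZ
  obtain ⟨hyi, hyT'⟩ := mem_inter.1 hy
  have hyT : y ∉ T := fun h => hxT' (eq_x hyi h ▸ hyT')
  have mem_of_private_x (k : ι) (hk : IsPrivate S Z T x k) : y ∈ S k := by
    have hxk : x ∈ S k := (mem_inter.1 (hk.2 ▸ mem_singleton_self x)).1
    obtain ⟨p, hp⟩ := hS i k ⟨x, mem_inter.2 ⟨hxi, hxk⟩⟩
    have hp_private : IsPrivate S Z T x p :=
      ⟨hT.index_notMem_of_mem hxT (hp ▸ mem_inter.2 ⟨hxi, hxk⟩), by rw [← hp]; grind⟩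
    have hi_le : S i ⊆ S p := hmin hp_private (hp ▸ inter_subset_left)
    exact (mem_inter.1 (hp ▸ hi_le hyi)).2
  have mem_of_private_y (k : ι) (hk : IsPrivate S Z T' y k) : x ∈ S k := by
    have hyk : y ∈ S k := (mem_inter.1 (hk.2 ▸ mem_singleton_self y)).1
    obtain ⟨p, hp⟩ := hS i k ⟨y, mem_inter.2 ⟨hyi, hyk⟩⟩
    obtain ⟨q, hq⟩ := hT.meets p (hT'.index_notMem_of_mem hyT' (hp ▸ mem_inter.2 ⟨hyi, hyk⟩))
    rw [← hp, mem_inter, mem_inter] at hq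
    exact eq_x hq.1.1 hq.2 ▸ hq.1.2
  exact ⟨y, mem_sdiff.2 ⟨hyT', hyT⟩, hT.swap hT' hxT (mem_sdiff.2 ⟨hyT', hyT⟩) mem_of_private_x,
    hT'.swap hT hyT' hx mem_of_private_y⟩

theorem exists_swap (hS : ∀ i j, (S i ∩ S j).Nonempty → ∃ k, S i ∩ S j = S k)
    (hT : IsFeasible S Z l u T) (hT' : IsFeasible S Z l u T')
    (hTT' : ¬T ⊆ T') (hT'T : ¬T' ⊆ T) :
    ∃ x ∈ T \ T', ∃ y ∈ T' \ T,
      IsFeasible S Z l u (T \ {x} ∪ {y}) ∧ IsFeasible S Z l u (T' \ {y} ∪ {x}) := by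
  obtain ⟨x, hx⟩ := sdiff_nonempty.2 hTT'
  obtain ⟨y, hy⟩ := sdiff_nonempty.2 hT'T
  by_cases hx_private : ∃ i, IsPrivate S Z T x i
  · exact ⟨x, hx, exists_swap_of_isPrivate hS hT hT' hx hx_private⟩
  by_cases hy_private : ∃ i, IsPrivate S Z T' y i
  · obtain ⟨x', hx', hswap', hswap⟩ := exists_swap_of_isPrivate hS hT' hT hy hy_private
    exact ⟨x', hx', y, hy, hswap, hswap'⟩
  · push Not at hx_private hy_private
    exact ⟨x, hx, y, hy,
      hT.swap hT' (mem_sdiff.1 hx).1 hy fun i hi => (hx_private i hi).elim,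
      hT'.swap hT (mem_sdiff.1 hy).1 hx fun i hi => (hy_private i hi).elim⟩

theorem exists_insert_erase_of_ssubset (hT : IsFeasible S Z l u T) (hT' : IsFeasible S Z l u T')
    (h : T ⊂ T') :
    ∃ y ∈ T' \ T, IsFeasible S Z l u (T ∪ {y}) ∧ IsFeasible S Z l u (T' \ {y}) := by
  obtain ⟨y, hyT', hyT⟩ := exists_of_ssubset h
  exact ⟨y, mem_sdiff.2 ⟨hyT', hyT⟩,
    hT.of_subset_of_subset hT' subset_union_left
      (union_subset h.subset (singleton_subset_iff.2 hyT')),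
    hT.of_subset_of_subset hT'
      (subset_sdiff.2 ⟨h.subset, disjoint_singleton_right.2 hyT⟩) sdiff_subset⟩

end IsFeasible

theorem hasSymmetricExchange_isFeasible {ι : Type*} {S : ι → Finset V}
    (hS : ∀ i j, (S i ∩ S j).Nonempty → ∃ k, S i ∩ S j = S k) (Z : Set ι) (l u : ℕ) :
    HasSymmetricExchange {T | IsFeasible S Z l u T} := by
  intro T hT T' hT' hne
  by_cases hTT' : T ⊆ T'
  · obtain ⟨y, hy, hins, hdel⟩ := hT.exists_insert_erase_of_ssubset hT' (hTT'.ssubset_of_ne hne)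
    exact ⟨∅, by simp, {y}, by simpa using hy, by simp, by simp, by simp, by simpa using hins,
      by simpa using hdel⟩
  by_cases hT'T : T' ⊆ T
  · obtain ⟨x, hx, hins, hdel⟩ :=
      hT'.exists_insert_erase_of_ssubset hT (hT'T.ssubset_of_ne hne.symm)
    exact ⟨{x}, by simpa using hx, ∅, by simp, by simp, by simp, by simp, by simpa using hdel,
      by simpa using hins⟩
  · obtain ⟨x, hx, y, hy, hswap, hswap'⟩ := hT.exists_swap hS hT' hTT' hT'T
    exact ⟨{x}, by simpa using hx, {y}, by simpa using hy, by simp, by simp, by simp, hswap,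
      hswap'⟩

end Exchange

section Optimization

variable {n : ℕ} {a b : Fin n → ℝ}

theorem FollowsPattern.sum_le_sum_of_card_le_one (hab : FollowsPattern n a b)
    {X Y : Finset (Fin n)} (hX : #X ≤ 1) (hY : #Y ≤ 1) (h : ∑ j ∈ Y, a j ≤ ∑ j ∈ X, a j) :
    ∑ j ∈ Y, b j ≤ ∑ j ∈ X, b j := by
  rw [Nat.le_one_iff_eq_zero_or_eq_one, card_eq_zero, card_eq_one] at hX hY
  obtain ⟨hsign, hmono⟩ := hab
  rcases hX with rfl | ⟨x, rfl⟩ <;> rcases hY with rfl | ⟨y, rfl⟩ <;>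
    simp only [sum_empty, sum_singleton] at h ⊢
  · exact le_rfl
  · exact (hsign y).2 h
  · exact (hsign x).1 h
  · exact hmono x y h

theorem HasSymmetricExchange.sum_le_sum_of_followsPattern {𝓕 : Set (Finset (Fin n))}
    (h𝓕 : HasSymmetricExchange 𝓕) (hab : FollowsPattern n a b) {T : Finset (Fin n)} (hT : T ∈ 𝓕)
    (hmax : ∀ T' ∈ 𝓕, ∑ j ∈ T', a j ≤ ∑ j ∈ T, a j) {T' : Finset (Fin n)} (hT' : T' ∈ 𝓕) :
    ∑ j ∈ T', b j ≤ ∑ j ∈ T, b j := by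
  induction hd : symmDiff T T' using Finset.strongInduction generalizing T' with
  | H d ih =>
  obtain rfl | hne := eq_or_ne T T'
  · exact le_rfl
  obtain ⟨X, hX, Y, hY, hX1, hY1, hXY, hmove, hmove'⟩ := h𝓕 T hT T' hT' hne
  obtain ⟨hXT, hXT'⟩ := subset_sdiff.1 hX
  obtain ⟨hYT', hYT⟩ := subset_sdiff.1 hY
  have ha : ∑ j ∈ Y, a j ≤ ∑ j ∈ X, a j := by
    have := hmax _ hmove
    rw [sum_sdiff_union a hXT hYT.symm] at this
    linarith
  have hb : ∑ j ∈ Y, b j ≤ ∑ j ∈ X, b j := hab.sum_le_sum_of_card_le_one hX1 hY1 ha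
  calc ∑ j ∈ T', b j
      ≤ ∑ j ∈ T' \ Y ∪ X, b j := by rw [sum_sdiff_union b hYT' hXT'.symm]; linarith
    _ ≤ ∑ j ∈ T, b j := ih _ (hd ▸ symmDiff_exchange_ssubset hX hY hXY) hmove' rfl

theorem HasSymmetricExchange.isGreatest_of_followsPattern {𝓕 : Set (Finset (Fin n))}
    (h𝓕 : HasSymmetricExchange 𝓕) (hab : FollowsPattern n a b) {T : Finset (Fin n)} (hT : T ∈ 𝓕)
    (hmax : IsGreatest ((fun T => ∑ j ∈ T, a j) '' 𝓕) (∑ j ∈ T, a j)) :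
    IsGreatest ((fun T => ∑ j ∈ T, b j) '' 𝓕) (∑ j ∈ T, b j) :=
  ⟨Set.mem_image_of_mem _ hT, Set.forall_mem_image.2 fun _ hT' =>
    h𝓕.sum_le_sum_of_followsPattern hab hT (Set.forall_mem_image.1 hmax.2) hT'⟩

end Optimization

section Fibers

variable {n m l u : ℕ} {S : Fin m → Finset (Fin n)} {δ : Fin m → ℝ}

theorem prod_one_sub_indicator {V R : Type*} [DecidableEq V] [CommRing R] (A T : Finset V) :
    ∏ j ∈ A, (1 - (T : Set V).indicator (1 : V → R) j) = if Disjoint A T then 1 else 0 := by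
  split_ifs with h
  · exact prod_eq_one fun j hj => by simp [disjoint_left.1 h hj]
  · obtain ⟨j, hjA, hjT⟩ := not_disjoint_iff.1 h
    exact prod_eq_zero hjA (by simp [hjT])

theorem indicator_mem_Xfiber_iff (hδ : ∀ i, δ i = 0 ∨ δ i = 1) (T : Finset (Fin n)) :
    (T : Set (Fin n)).indicator 1 ∈ Xfiber n m l u S δ ↔ IsFeasible S {i | δ i = 1} l u T := by
  have hbin (j : Fin n) : (T : Set (Fin n)).indicator (1 : Fin n → ℝ) j = 0 ∨
      (T : Set (Fin n)).indicator (1 : Fin n → ℝ) j = 1 := by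
    simp [Set.indicator_apply, em']
  have hsum : ∑ j, (T : Set (Fin n)).indicator (1 : Fin n → ℝ) j = #T := by
    simp [Set.indicator_apply]
  have hprod (i : Fin m) : (δ i = if Disjoint (S i) T then 1 else 0) ↔
      (δ i = 1 → Disjoint (S i) T) ∧ (δ i ≠ 1 → (S i ∩ T).Nonempty) := by
    rw [← not_disjoint_iff_nonempty_inter]
    rcases hδ i with hi | hi <;> by_cases h : Disjoint (S i) T <;> simp [hi, h]
  simp only [Xfiber, Xset, Set.mem_ofPred_eq, hsum, prod_one_sub_indicator, hprod, Nat.cast_le]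
  exact ⟨fun ⟨_, _, h, hl, hu⟩ => ⟨fun i => (h i).1, fun i => (h i).2, hl, hu⟩,
    fun h => ⟨hbin, hδ, fun i => ⟨h.disjoint i, h.meets i⟩, h.le_card, h.card_le⟩⟩

theorem Xfiber_eq_image_indicator (hδ : ∀ i, δ i = 0 ∨ δ i = 1) :
    Xfiber n m l u S δ = (fun T : Finset (Fin n) => (T : Set (Fin n)).indicator 1) ''
      {T | IsFeasible S {i | δ i = 1} l u T} := by
  ext z
  constructor
  · intro hz
    have hind : ((univ.filter (z · = 1) : Finset (Fin n)) : Set (Fin n)).indicator 1 = z := by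
      ext j
      rcases hz.1 j with hj | hj <;> simp only at hj <;> simp [hj]
    exact ⟨_, (indicator_mem_Xfiber_iff hδ _).1 (hind.symm ▸ hz), hind⟩
  · rintro ⟨T, hT, rfl⟩
    exact (indicator_mem_Xfiber_iff hδ T).2 hT

theorem image_sum_mul_Xfiber (hδ : ∀ i, δ i = 0 ∨ δ i = 1) (a : Fin n → ℝ) :
    (fun z => ∑ j, a j * z j) '' Xfiber n m l u S δ =
      (fun T => ∑ j ∈ T, a j) '' {T | IsFeasible S {i | δ i = 1} l u T} := by
  rw [Xfiber_eq_image_indicator hδ, Set.image_image]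
  simp [Set.indicator_apply]

end Fibers

theorem stmt3_general {n m l u : ℕ} {S : Fin m → Finset (Fin n)} (hS : ClosedInter n m S)
    {δ : Fin m → ℝ} {α αp αm : Fin n → ℝ} (hαp : FollowsPattern n α αp)
    (hαm : FollowsPattern n α αm) {lam mu : ℝ} (hcomb : α = lam • αp + mu • αm) {να νp νm : ℝ}
    (hνα : IsGreatest ((fun z => ∑ j, α j * z j) '' Xfiber n m l u S δ) να)
    (hνp : IsGreatest ((fun z => ∑ j, αp j * z j) '' Xfiber n m l u S δ) νp)
    (hνm : IsGreatest ((fun z => ∑ j, αm j * z j) '' Xfiber n m l u S δ) νm) :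
    να = lam * νp + mu * νm := by
  have hδ : ∀ i, δ i = 0 ∨ δ i = 1 := by
    obtain ⟨z, hz, -⟩ := hνα.1
    exact hz.2.1
  rw [image_sum_mul_Xfiber hδ] at hνα hνp hνm
  have hexch := hasSymmetricExchange_isFeasible hS {i | δ i = 1} l u
  obtain ⟨T, hT, rfl⟩ := hνα.1
  rw [hνp.unique (hexch.isGreatest_of_followsPattern hαp hT hνα),
    hνm.unique (hexch.isGreatest_of_followsPattern hαm hT hνα), hcomb]
  simp [sum_add_distrib, mul_sum]

theorem stmt3 (n m l u : ℕ) (S : Fin m → Finset (Fin n))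
    (hn : 0 < n) (hm : 0 < m) (hlu : l ≤ u) (hu : 2 ≤ u)
    (hdist : Function.Injective S)
    (hcard : ∀ i, 1 ≤ (S i).card ∧ (S i).card ≤ n - l)
    (hproper : ProperFam n m l u S)
    (D : Fin (m + 1) → (Fin m → ℝ)) (hDinj : Function.Injective D)
    (hDrange : Set.range D = Dset n m l u S)
    (α αp αm : Fin n → ℝ) (β : Fin m → ℝ) (γ : ℝ)
    (heq : ∀ i : Fin (m + 1),
      IsGreatest ((fun z => ∑ j, α j * z j) '' Xfiber n m l u S (D i))
        (γ - ∑ k, β k * D i k))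
    (hpat1 : FollowsPattern n α αp) (hpat2 : FollowsPattern n α αm)
    (lam mu : ℝ) (hlam : 0 ≤ lam) (hmu : 0 ≤ mu)
    (hcomb : α = lam • αp + mu • αm)
    (να νp νm : Fin (m + 1) → ℝ)
    (hνα : ∀ i, IsGreatest ((fun z => ∑ j, α j * z j) '' Xfiber n m l u S (D i)) (να i))
    (hνp : ∀ i, IsGreatest ((fun z => ∑ j, αp j * z j) '' Xfiber n m l u S (D i)) (νp i))
    (hνm : ∀ i, IsGreatest ((fun z => ∑ j, αm j * z j) '' Xfiber n m l u S (D i)) (νm i)) :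
    να = lam • νp + mu • νm := by
  funext i
  exact stmt3_general hproper.1 hpat1 hpat2 hcomb (hνα i) (hνp i) (hνm i)
end
end

section
/- Assume S is a proper family and Δ^{l,u} = Δ^{0,n}. Then conv(X^{l,u}) = conv(X^{0,u}) ∩ conv(X^{l,n}). -/
open Finset

noncomputable section

/-!
Separate a point outside `conv X^{l,u}` by `α · z + φ(δ) < c`. For fixed `δ`, the supports of the
`z` with `(z, δ) ∈ X^{0,n}` form a generalized matroid, so exchanges make a maximizer of `α⁺` over
its members of cardinality at most `u` and a minimizer of `α⁻` over its members of cardinality at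
least `l` coincide. This common optimum lies in `X^{l,u}`, hence, for `X` and `Y` in the generalized
matroid with `#X ≤ u` and `l ≤ #Y`,
`∑ j ∈ X, α⁺ j < c - φ(δ) + ∑ j ∈ Y, α⁻ j`.
The points `δ` being affinely independent, one affine function `A` satisfies
`∑ j ∈ X, α⁺ j < A(δ) < c - φ(δ) + ∑ j ∈ Y, α⁻ j` for all of them at once. The separating inequality
is then the sum of `α⁺ · z - A(δ) < 0`, valid on `X^{0,u}`, and
`A(δ) + φ(δ) - α⁻ · z < c`, valid on `X^{l,n}`.
-/

section Exchange

section Basic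

variable {J G : Type*} [DecidableEq J] {X Y X' Y' : Finset J} {i j : J}

lemma card_symmDiff_lt (hXY : X' \ Y' ⊆ X \ Y) (hYX : Y' \ X' ⊆ Y \ X)
    (hi : i ∈ symmDiff X Y) (hi' : i ∉ symmDiff X' Y') : #(symmDiff X' Y') < #(symmDiff X Y) :=
  card_lt_card ((ssubset_iff_of_subset (union_subset_union hXY hYX)).2 ⟨i, hi, hi'⟩)

lemma card_insert_erase (hi : i ∈ X) (hj : j ∉ X) : #(insert j (X.erase i)) = #X := by
  rw [card_insert_of_notMem (by simp [hj]), card_erase_add_one hi]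

lemma sum_insert_erase [AddCommGroup G] (hi : i ∈ X) (hj : j ∉ X) (w : J → G) :
    ∑ k ∈ insert j (X.erase i), w k = ∑ k ∈ X, w k + (w j - w i) := by
  rw [sum_insert (by simp [hj]), sum_erase_eq_sub hi]
  abel

end Basic

variable {J G : Type*} [AddCommGroup G] [LinearOrder G]
  {𝓕 : Set (Finset J)} {l u : ℕ} {w : J → G} {X Y Z : Finset J}

/-- The members of `𝓕` of cardinality at most `u` with the largest total weight. -/
def lightMaximizers (𝓕 : Set (Finset J)) (u : ℕ) (w : J → G) : Set (Finset J) :=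
  {X | X ∈ 𝓕 ∧ #X ≤ u ∧ ∀ X' ∈ 𝓕, #X' ≤ u → ∑ j ∈ X', w j ≤ ∑ j ∈ X, w j}

/-- The members of `𝓕` of cardinality at least `l` with the smallest total weight. -/
def heavyMinimizers (𝓕 : Set (Finset J)) (l : ℕ) (w : J → G) : Set (Finset J) :=
  {Y | Y ∈ 𝓕 ∧ l ≤ #Y ∧ ∀ Y' ∈ 𝓕, l ≤ #Y' → ∑ j ∈ Y, w j ≤ ∑ j ∈ Y', w j}

lemma mem_lightMaximizers_of_sum_le (hX : X ∈ lightMaximizers 𝓕 u w) (hZ : Z ∈ 𝓕)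
    (hu : #Z ≤ u) (hw : ∑ j ∈ X, w j ≤ ∑ j ∈ Z, w j) : Z ∈ lightMaximizers 𝓕 u w :=
  ⟨hZ, hu, fun X' hX' hu' => (hX.2.2 X' hX' hu').trans hw⟩

lemma mem_heavyMinimizers_of_sum_le (hY : Y ∈ heavyMinimizers 𝓕 l w) (hZ : Z ∈ 𝓕)
    (hl : l ≤ #Z) (hw : ∑ j ∈ Z, w j ≤ ∑ j ∈ Y, w j) : Z ∈ heavyMinimizers 𝓕 l w :=
  ⟨hZ, hl, fun Y' hY' hl' => hw.trans (hY.2.2 Y' hY' hl')⟩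

lemma lightMaximizers_nonempty (h𝓕 : 𝓕.Finite) (hX : X ∈ 𝓕) (hu : #X ≤ u) (w : J → G) :
    (lightMaximizers 𝓕 u w).Nonempty := by
  obtain ⟨Z, ⟨hZ, hZu⟩, hmax⟩ := Set.exists_max_image {Z ∈ 𝓕 | #Z ≤ u} (fun Z => ∑ j ∈ Z, w j)
    (h𝓕.sep _) ⟨X, hX, hu⟩
  exact ⟨Z, hZ, hZu, fun X' hX' hu' => hmax X' ⟨hX', hu'⟩⟩

lemma heavyMinimizers_nonempty (h𝓕 : 𝓕.Finite) (hY : Y ∈ 𝓕) (hl : l ≤ #Y) (w : J → G) :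
    (heavyMinimizers 𝓕 l w).Nonempty := by
  obtain ⟨Z, ⟨hZ, hZl⟩, hmin⟩ := Set.exists_min_image {Z ∈ 𝓕 | l ≤ #Z} (fun Z => ∑ j ∈ Z, w j)
    (h𝓕.sep _) ⟨Y, hY, hl⟩
  exact ⟨Z, hZ, hZl, fun Y' hY' hl' => hmin Y' ⟨hY', hl'⟩⟩

variable [DecidableEq J]

/-- The simultaneous exchange axiom of generalized matroids (M♮-convex set families), the property
of the fibers of `δ` on which the optimization over these fibers rests. -/
def SimultaneousExchange (𝓕 : Set (Finset J)) : Prop :=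
  ∀ X ∈ 𝓕, ∀ Y ∈ 𝓕, ∀ i ∈ X \ Y,
    (X.erase i ∈ 𝓕 ∧ insert i Y ∈ 𝓕) ∨
      ∃ j ∈ Y \ X, insert j (X.erase i) ∈ 𝓕 ∧ insert i (Y.erase j) ∈ 𝓕

variable [IsOrderedAddMonoid G] {α : J → G}

/- A simultaneous exchange always improves one of the two optima weakly: if `α j` is at least `α i`,
trading `i` for `j` in `X` does not decrease the sum of `α⁺`; otherwise trading `j` for `i` in `Y`
does not increase the sum of `α⁻`. Without a partner `j`, the sign of `α i` decides. -/
lemma exists_closer_optima_of_mem_sdiff (h𝓕 : SimultaneousExchange 𝓕)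
    (hX : X ∈ lightMaximizers 𝓕 u fun j => (α j)⁺) (hY : Y ∈ heavyMinimizers 𝓕 l fun j => (α j)⁻)
    {i : J} (hi : i ∈ X \ Y) :
    ∃ X' ∈ lightMaximizers 𝓕 u fun j => (α j)⁺, ∃ Y' ∈ heavyMinimizers 𝓕 l fun j => (α j)⁻,
      #(symmDiff X' Y') < #(symmDiff X Y) := by
  obtain ⟨hiX, hiY⟩ := mem_sdiff.1 hi
  have hiXY : i ∈ symmDiff X Y := mem_symmDiff.2 (.inl ⟨hiX, hiY⟩)
  rcases h𝓕 X hX.1 Y hY.1 i hi with ⟨hXi, hYi⟩ | ⟨j, hj, hXij, hYij⟩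
  · rcases le_total (α i) 0 with hαi | hαi
    · refine ⟨X.erase i, mem_lightMaximizers_of_sum_le hX hXi (card_erase_le.trans hX.2.1)
        (sum_erase X (posPart_eq_zero.2 hαi)).ge, Y, hY, ?_⟩
      exact card_symmDiff_lt (by grind) (by grind) hiXY (by grind [mem_symmDiff])
    · refine ⟨X, hX, insert i Y, mem_heavyMinimizers_of_sum_le hY hYi
        (hY.2.1.trans (card_le_card (subset_insert i Y))) ?_, ?_⟩
      · rw [sum_insert hiY, negPart_eq_zero.2 hαi, zero_add]
      exact card_symmDiff_lt (by grind) (by grind) hiXY (by grind [mem_symmDiff])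
  · obtain ⟨hjY, hjX⟩ := mem_sdiff.1 hj
    rcases le_total (α i) (α j) with hαij | hαij
    · refine ⟨insert j (X.erase i), mem_lightMaximizers_of_sum_le hX hXij
        ((card_insert_erase hiX hjX).trans_le hX.2.1) ?_, Y, hY, ?_⟩
      · rw [sum_insert_erase hiX hjX]
        exact le_add_of_nonneg_right (sub_nonneg.2 (posPart_mono hαij))
      exact card_symmDiff_lt (by grind) (by grind) hiXY (by grind [mem_symmDiff])
    · refine ⟨X, hX, insert i (Y.erase j), mem_heavyMinimizers_of_sum_le hY hYij
        (hY.2.1.trans_eq (card_insert_erase hjY hiY).symm) ?_, ?_⟩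
      · rw [sum_insert_erase hjY hiY]
        exact add_le_of_nonpos_right (sub_nonpos.2 (negPart_anti hαij))
      exact card_symmDiff_lt (by grind) (by grind) hiXY (by grind [mem_symmDiff])

lemma exists_closer_optima_of_ssubset (h𝓕 : SimultaneousExchange 𝓕) (hlu : l ≤ u)
    (hX : X ∈ lightMaximizers 𝓕 u fun j => (α j)⁺) (hY : Y ∈ heavyMinimizers 𝓕 l fun j => (α j)⁻)
    (hXY : X ⊂ Y) :
    ∃ X' ∈ lightMaximizers 𝓕 u fun j => (α j)⁺, ∃ Y' ∈ heavyMinimizers 𝓕 l fun j => (α j)⁻,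
      #(symmDiff X' Y') < #(symmDiff X Y) := by
  obtain ⟨i, hiY, hiX⟩ := exists_of_ssubset hXY
  have hiXY : i ∈ symmDiff X Y := mem_symmDiff.2 (.inr ⟨hiY, hiX⟩)
  obtain ⟨hYi, hXi⟩ : Y.erase i ∈ 𝓕 ∧ insert i X ∈ 𝓕 := by
    refine (h𝓕 Y hY.1 X hX.1 i (mem_sdiff.2 ⟨hiY, hiX⟩)).resolve_right ?_
    simp [sdiff_eq_empty_iff_subset.2 hXY.subset]
  have hcard := card_lt_card hXY
  rcases lt_or_ge #X u with hu | hu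
  · refine ⟨insert i X, mem_lightMaximizers_of_sum_le hX hXi ?_ ?_, Y, hY, ?_⟩
    · rwa [card_insert_of_notMem hiX]
    · rw [sum_insert hiX]
      exact le_add_of_nonneg_left (posPart_nonneg _)
    exact card_symmDiff_lt (by grind) (by grind) hiXY (by grind [mem_symmDiff])
  · refine ⟨X, hX, Y.erase i, mem_heavyMinimizers_of_sum_le hY hYi ?_ ?_, ?_⟩
    · rw [card_erase_of_mem hiY]
      omega
    · rw [sum_erase_eq_sub hiY]
      exact sub_le_self _ (negPart_nonneg _)
    exact card_symmDiff_lt (by grind) (by grind) hiXY (by grind [mem_symmDiff])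

lemma lightMaximizers_inter_heavyMinimizers_nonempty (h𝓕 : SimultaneousExchange 𝓕)
    (hlu : l ≤ u) (hX : X ∈ lightMaximizers 𝓕 u fun j => (α j)⁺)
    (hY : Y ∈ heavyMinimizers 𝓕 l fun j => (α j)⁻) :
    (lightMaximizers 𝓕 u (fun j => (α j)⁺) ∩ heavyMinimizers 𝓕 l fun j => (α j)⁻).Nonempty := by
  induction hN : #(symmDiff X Y) using Nat.strong_induction_on generalizing X Y with
  | _ N ih =>
    subst hN
    by_cases hne : X = Y
    · exact ⟨X, hX, hne ▸ hY⟩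
    obtain ⟨X', hX', Y', hY', hlt⟩ : ∃ X' ∈ lightMaximizers 𝓕 u fun j => (α j)⁺,
        ∃ Y' ∈ heavyMinimizers 𝓕 l fun j => (α j)⁻, #(symmDiff X' Y') < #(symmDiff X Y) := by
      rcases (X \ Y).eq_empty_or_nonempty with hsub | ⟨i, hi⟩
      · exact exists_closer_optima_of_ssubset h𝓕 hlu hX hY
          ((sdiff_eq_empty_iff_subset.1 hsub).ssubset_of_ne hne)
      · exact exists_closer_optima_of_mem_sdiff h𝓕 hX hY hi
    exact ih _ hlt hX' hY' rfl

lemma sum_posPart_lt_of_simultaneousExchange (h𝓕 : SimultaneousExchange 𝓕) (hfin : 𝓕.Finite)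
    (hlu : l ≤ u) {M : G} (hM : ∀ Z ∈ 𝓕, l ≤ #Z → #Z ≤ u → ∑ j ∈ Z, α j < M)
    (hX : X ∈ 𝓕) (hXu : #X ≤ u) (hY : Y ∈ 𝓕) (hYl : l ≤ #Y) :
    ∑ j ∈ X, (α j)⁺ < M + ∑ j ∈ Y, (α j)⁻ := by
  obtain ⟨X₀, hX₀⟩ := lightMaximizers_nonempty hfin hX hXu fun j => (α j)⁺
  obtain ⟨Y₀, hY₀⟩ := heavyMinimizers_nonempty hfin hY hYl fun j => (α j)⁻
  obtain ⟨Z, hZX, hZY⟩ := lightMaximizers_inter_heavyMinimizers_nonempty h𝓕 hlu hX₀ hY₀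
  calc ∑ j ∈ X, (α j)⁺ ≤ ∑ j ∈ Z, (α j)⁺ := hZX.2.2 X hX hXu
    _ = ∑ j ∈ Z, α j + ∑ j ∈ Z, (α j)⁻ := by
      rw [← sum_add_distrib]
      exact sum_congr rfl fun j _ => by rw [← sub_eq_iff_eq_add, posPart_sub_negPart]
    _ < M + ∑ j ∈ Y, (α j)⁻ :=
      add_lt_add_of_lt_of_le (hM Z hZX.1 hZY.2.1 hZX.2.1) (hZY.2.2 Y hY hYl)

end Exchange

section DisjointFibers

variable {I J : Type*} [DecidableEq J] {S : I → Finset J}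

lemma exists_least_of_inter_closed (hS : ∀ a b, (S a ∩ S b).Nonempty → ∃ c, S a ∩ S b = S c)
    {i : J} (hi : ∃ a, i ∈ S a) : ∃ b, i ∈ S b ∧ ∀ a, i ∈ S a → S b ⊆ S a := by
  obtain ⟨b, hib, hmin⟩ := exists_minimalFor_of_wellFoundedLT (fun a => i ∈ S a) S hi
  refine ⟨b, hib, fun a hia => ?_⟩
  obtain ⟨c, hc⟩ := hS a b ⟨i, mem_inter.2 ⟨hia, hib⟩⟩
  have hic : i ∈ S c := hc ▸ mem_inter.2 ⟨hia, hib⟩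
  have hbc : S b ⊆ S c := hmin hic (hc ▸ inter_subset_right)
  exact (hc ▸ hbc).trans inter_subset_left

lemma exists_inter_eq_singleton_of_disjoint_erase
    (hS : ∀ a b, (S a ∩ S b).Nonempty → ∃ c, S a ∩ S b = S c) {X : Finset J} {i : J} {a₀ : I}
    (hX : ¬Disjoint (S a₀) X) (hXi : Disjoint (S a₀) (X.erase i)) :
    ∃ b, X ∩ S b = {i} ∧ ∀ a, i ∈ S a → S b ⊆ S a := by
  have hX₀ : X ∩ S a₀ = {i} := by
    rw [not_disjoint_iff] at hX
    grind [disjoint_left]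
  have hi : i ∈ X ∩ S a₀ := hX₀ ▸ mem_singleton_self i
  obtain ⟨hiX, hia₀⟩ := mem_inter.1 hi
  obtain ⟨b, hib, hb⟩ := exists_least_of_inter_closed hS ⟨a₀, hia₀⟩
  refine ⟨b, (hX₀ ▸ inter_subset_inter_left (hb a₀ hia₀)).antisymm ?_, hb⟩
  exact singleton_subset_iff.2 (mem_inter.2 ⟨hiX, hib⟩)

/- If erasing `i` from `X` makes it miss a new set, then `i` is traded for an element `j` of `Y` in
the least set `S b` containing `i`: a set missed by `insert j (X.erase i)` does not contain `i`, and
a set missed by `insert i (Y.erase j)` does not contain `j`. -/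
lemma simultaneousExchange_setOf_disjoint_iff
    (hS : ∀ a b, (S a ∩ S b).Nonempty → ∃ c, S a ∩ S b = S c) (p : I → Prop) :
    SimultaneousExchange {Z | ∀ a, Disjoint (S a) Z ↔ p a} := by
  intro X hX Y hY i hi
  obtain ⟨hiX, hiY⟩ := mem_sdiff.1 hi
  have mem_of_subset_union {Z : Finset J} (hZ : Z ⊆ X ∪ Y) (hp : ∀ a, Disjoint (S a) Z → p a)
      (a : I) : Disjoint (S a) Z ↔ p a :=
    ⟨hp a, fun ha => (disjoint_union_right.2 ⟨(hX a).2 ha, (hY a).2 ha⟩).mono_right hZ⟩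
  by_cases hXi : ∀ a, Disjoint (S a) (X.erase i) → p a
  · left
    exact ⟨mem_of_subset_union (by grind) hXi,
      mem_of_subset_union (by grind) fun a ha => (hY a).1 (ha.mono_right (subset_insert i Y))⟩
  right
  push Not at hXi
  obtain ⟨a₀, ha₀, hpa₀⟩ := hXi
  obtain ⟨b, hXb, hb⟩ :=
    exists_inter_eq_singleton_of_disjoint_erase hS (mt (hX a₀).1 hpa₀) ha₀
  have eq_of_mem {k : J} (hkX : k ∈ X) (hkb : k ∈ S b) : k = i :=
    mem_singleton.1 (hXb ▸ mem_inter.2 ⟨hkX, hkb⟩)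
  have hib : i ∈ S b := mem_of_mem_inter_right (hXb ▸ mem_singleton_self i)
  have hpb : ¬p b := mt (hX b).2 (not_disjoint_iff.2 ⟨i, hib, hiX⟩)
  obtain ⟨j, hjb, hjY⟩ := not_disjoint_iff.1 (mt (hY b).1 hpb)
  have hjX : j ∉ X := fun hjX => hiY (eq_of_mem hjX hjb ▸ hjY)
  refine ⟨j, mem_sdiff.2 ⟨hjY, hjX⟩, mem_of_subset_union (by grind) fun a ha => ?_,
    mem_of_subset_union (by grind) fun a ha => ?_⟩
  · have hia : i ∉ S a := fun hia => disjoint_left.1 ha (hb a hia hjb) (mem_insert_self j _)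
    exact (hX a).1 (by grind [disjoint_left])
  · have hja : j ∉ S a := by
      intro hja
      have hj : j ∈ S a ∩ S b := mem_inter.2 ⟨hja, hjb⟩
      obtain ⟨c, hc⟩ := hS a b ⟨j, hj⟩
      have hpc : ¬p c := mt (hY c).2 (not_disjoint_iff.2 ⟨j, hc ▸ hj, hjY⟩)
      obtain ⟨k, hkc, hkX⟩ := not_disjoint_iff.1 (mt (hX c).1 hpc)
      obtain ⟨hka, hkb⟩ := mem_inter.1 (hc ▸ hkc)
      exact disjoint_left.1 ha (eq_of_mem hkX hkb ▸ hka) (mem_insert_self i _)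
    exact (hY a).1 (by grind [disjoint_left])

end DisjointFibers

section AffineInterpolation

variable {k V P ι : Type*} [Field k] [AddCommGroup V] [Module k V] [AddTorsor V P] {p : ι → P}

lemma exists_affineMap_apply_eq (hp : AffineIndependent k p) (g : ι → k) :
    ∃ A : P →ᵃ[k] k, ∀ i, A (p i) = g i := by
  rcases isEmpty_or_nonempty ι with _ | ⟨⟨i₀⟩⟩
  · exact ⟨AffineMap.const k P 0, isEmptyElim⟩
  have hv := (affineIndependent_iff_linearIndependent_vsub k p i₀).1 hp
  obtain ⟨L, hL⟩ := ((Finsupp.linearCombination k fun i : {i // i ≠ i₀} => g i - g i₀).comp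
    hv.repr).exists_extend
  refine ⟨L.toAffineMap.comp (AffineMap.id k P -ᵥ AffineMap.const k P (p i₀)) +
    AffineMap.const k P (g i₀), fun i => ?_⟩
  rcases eq_or_ne i i₀ with rfl | hi
  · simp
  have hLi : L (p i -ᵥ p i₀) = g i - g i₀ := by
    have hmem : p i -ᵥ p i₀ ∈ Submodule.span k (Set.range fun i : {i // i ≠ i₀} => p i -ᵥ p i₀) :=
      Submodule.subset_span ⟨⟨i, hi⟩, rfl⟩
    have hL_apply := LinearMap.congr_fun hL ⟨_, hmem⟩
    rw [LinearMap.comp_apply, LinearMap.comp_apply, hv.repr_eq_single ⟨i, hi⟩ _ rfl,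
      Finsupp.linearCombination_single, one_smul] at hL_apply
    exact hL_apply
  simp [hLi]

variable [LinearOrder k] [IsStrictOrderedRing k]

lemma exists_affineMap_between {κ κ' : Type*} (hp : AffineIndependent k p)
    (s : Finset κ) (t : Finset κ') (a : κ → ι) (b : κ' → ι) (g : κ → k) (h : κ' → k)
    (hgh : ∀ x ∈ s, ∀ y ∈ t, a x = b y → g x < h y) :
    ∃ A : P →ᵃ[k] k, (∀ x ∈ s, g x < A (p (a x))) ∧ ∀ y ∈ t, A (p (b y)) < h y := by
  classical
  have hbetween (i : ι) : ∃ r, (∀ x ∈ s, a x = i → g x < r) ∧ ∀ y ∈ t, b y = i → r < h y := by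
    obtain ⟨r, hrs, hrt⟩ := Order.exists_between_finsets
      ({x ∈ s | a x = i}.image g) ({y ∈ t | b y = i}.image h) (by
        simp only [mem_image, mem_filter]
        rintro _ ⟨x, ⟨hx, hxi⟩, rfl⟩ _ ⟨y, ⟨hy, hyi⟩, rfl⟩
        exact hgh x hx y hy (hxi.trans hyi.symm))
    exact ⟨r, fun x hx hxi => hrs _ (mem_image_of_mem g (mem_filter.2 ⟨hx, hxi⟩)),
      fun y hy hyi => hrt _ (mem_image_of_mem h (mem_filter.2 ⟨hy, hyi⟩))⟩
  choose r hrs hrt using hbetween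
  obtain ⟨A, hA⟩ := exists_affineMap_apply_eq hp r
  exact ⟨A, fun x hx => hA (a x) ▸ hrs _ x hx rfl, fun y hy => hA (b y) ▸ hrt _ y hy rfl⟩

end AffineInterpolation

section Lift

variable {J E : Type*} [DecidableEq J] {δ : Finset J → E} {l u : ℕ}

/-- The pair `(z, δ)` formed by the indicator vector `z` of a finite set and the value of `δ` at
that set; the sets `X^{l,u}` consist of such points. -/
def liftedPoint (δ : Finset J → E) (Z : Finset J) : (J → ℝ) × E :=
  (fun j => if j ∈ Z then 1 else 0, δ Z)

lemma linearCombination_liftedPoint_fst [Fintype J] (w : J → ℝ) (Z : Finset J) :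
    Fintype.linearCombination ℝ w (liftedPoint δ Z).1 = ∑ j ∈ Z, w j := by
  simp [liftedPoint, Fintype.linearCombination_apply]

variable [AddCommGroup E] [Module ℝ E]

lemma linearMap_apply_liftedPoint (f : (J → ℝ) × E →ₗ[ℝ] ℝ) (Z : Finset J) :
    f (liftedPoint δ Z) = ∑ j ∈ Z, f (Pi.single j 1, 0) + f (0, δ Z) := by
  have hZ : liftedPoint δ Z = ∑ j ∈ Z, (Pi.single j 1, 0) + (0, δ Z) := by
    ext j <;> simp [liftedPoint, Prod.fst_sum, Prod.snd_sum, Pi.single_apply]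
  rw [hZ, map_add, map_sum]

lemma exists_affineMap_between_sum_posPart_sum_negPart [Finite J]
    (hδ : AffineIndependent ℝ ((↑) : Set.range δ → E))
    (hfib : ∀ Z, SimultaneousExchange (δ ⁻¹' {δ Z})) (hlu : l ≤ u) {α : J → ℝ} {M : E → ℝ}
    (hM : ∀ Z : Finset J, l ≤ #Z → #Z ≤ u → ∑ j ∈ Z, α j < M (δ Z)) :
    ∃ A : E →ᵃ[ℝ] ℝ, (∀ X : Finset J, #X ≤ u → ∑ j ∈ X, (α j)⁺ < A (δ X)) ∧
      ∀ Y : Finset J, l ≤ #Y → A (δ Y) < M (δ Y) + ∑ j ∈ Y, (α j)⁻ := by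
  cases nonempty_fintype J
  have hgap (X : Finset J) (hX : #X ≤ u) (Y : Finset J) (hY : l ≤ #Y) (hXY : δ X = δ Y) :
      ∑ j ∈ X, (α j)⁺ < M (δ Y) + ∑ j ∈ Y, (α j)⁻ := by
    refine sum_posPart_lt_of_simultaneousExchange (hfib Y) (Set.toFinite _) hlu
      (fun Z hZ hl hu => ?_) hXY hX rfl hY
    have hZY : δ Z = δ Y := hZ
    exact hZY ▸ hM Z hl hu
  simpa [Set.rangeFactorization] using exists_affineMap_between hδ {X | #X ≤ u} {Y | l ≤ #Y}
    (Set.rangeFactorization δ) (Set.rangeFactorization δ) (fun X => ∑ j ∈ X, (α j)⁺)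
    (fun Y => M (δ Y) + ∑ j ∈ Y, (α j)⁻) fun X hX Y hY hXY =>
      hgap X (by simpa using hX) Y (by simpa using hY) (congrArg Subtype.val hXY)

lemma exists_affineMap_lt_of_linearMap_lt [Finite J]
    (hδ : AffineIndependent ℝ ((↑) : Set.range δ → E))
    (hfib : ∀ Z, SimultaneousExchange (δ ⁻¹' {δ Z})) (hlu : l ≤ u)
    {f : (J → ℝ) × E →ₗ[ℝ] ℝ} {c : ℝ}
    (hf : ∀ Z : Finset J, l ≤ #Z → #Z ≤ u → f (liftedPoint δ Z) < c) :
    ∃ g : (J → ℝ) × E →ᵃ[ℝ] ℝ, (∀ Z : Finset J, #Z ≤ u → g (liftedPoint δ Z) < 0) ∧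
      ∀ Z : Finset J, l ≤ #Z → (f.toAffineMap - g) (liftedPoint δ Z) < c := by
  cases nonempty_fintype J
  set α : J → ℝ := fun j => f (Pi.single j 1, 0)
  obtain ⟨A, hAu, hAl⟩ := exists_affineMap_between_sum_posPart_sum_negPart hδ hfib hlu (α := α)
    (M := fun e => c - f (0, e)) fun Z hl hu =>
      lt_sub_iff_add_lt.2 (linearMap_apply_liftedPoint f Z ▸ hf Z hl hu)
  let g : (J → ℝ) × E →ᵃ[ℝ] ℝ :=
    (Fintype.linearCombination ℝ fun j => (α j)⁺).toAffineMap.comp AffineMap.fst -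
      A.comp AffineMap.snd
  have hg (Z : Finset J) : g (liftedPoint δ Z) = ∑ j ∈ Z, (α j)⁺ - A (δ Z) :=
    congrArg (· - A (δ Z)) (linearCombination_liftedPoint_fst (δ := δ) (fun j => (α j)⁺) Z)
  refine ⟨g, fun X hX => hg X ▸ sub_neg.2 (hAu X hX), fun Y hY => ?_⟩
  have hα : ∑ j ∈ Y, (α j)⁺ - ∑ j ∈ Y, (α j)⁻ = ∑ j ∈ Y, α j := by
    simp_rw [← sum_sub_distrib, posPart_sub_negPart]
  have hA : A (δ Y) < c - f (0, δ Y) + ∑ j ∈ Y, (α j)⁻ := hAl Y hY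
  rw [AffineMap.coe_sub, Pi.sub_apply, hg, LinearMap.coe_toAffineMap, linearMap_apply_liftedPoint]
  linarith

lemma affineMap_lt_of_mem_convexHull {s : Set E} {g : E →ᵃ[ℝ] ℝ} {c : ℝ} (hg : ∀ x ∈ s, g x < c)
    {x : E} (hx : x ∈ convexHull ℝ s) : g x < c :=
  convexHull_min (t := g ⁻¹' Set.Iio c) hg ((convex_Iio c).affine_preimage g) hx

theorem convexHull_liftedPoint_eq_inter [Finite J] [TopologicalSpace E] [IsTopologicalAddGroup E]
    [ContinuousSMul ℝ E] [LocallyConvexSpace ℝ E] [T2Space E]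
    (hδ : AffineIndependent ℝ ((↑) : Set.range δ → E))
    (hfib : ∀ Z, SimultaneousExchange (δ ⁻¹' {δ Z})) (hlu : l ≤ u) :
    convexHull ℝ (liftedPoint δ '' {Z | l ≤ #Z ∧ #Z ≤ u}) =
      convexHull ℝ (liftedPoint δ '' {Z | #Z ≤ u}) ∩
        convexHull ℝ (liftedPoint δ '' {Z | l ≤ #Z}) := by
  refine (Set.subset_inter (convexHull_mono (Set.image_mono fun Z hZ => hZ.2))
    (convexHull_mono (Set.image_mono fun Z hZ => hZ.1))).antisymm ?_
  rintro q ⟨hqu, hql⟩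
  by_contra hq
  obtain ⟨f, c, hfc, hcq⟩ := geometric_hahn_banach_closed_point (convex_convexHull ℝ _)
    ((Set.toFinite (liftedPoint δ '' {Z | l ≤ #Z ∧ #Z ≤ u})).isClosed_convexHull (𝕜 := ℝ)) hq
  obtain ⟨g, hgu, hgl⟩ := exists_affineMap_lt_of_linearMap_lt (f := f.toLinearMap) hδ hfib hlu
    fun Z hl hu => hfc _ (subset_convexHull ℝ _ (Set.mem_image_of_mem _ ⟨hl, hu⟩))
  have hg : g q < 0 := affineMap_lt_of_mem_convexHull (Set.forall_mem_image.2 hgu) hqu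
  have hfg : f q - g q < c := affineMap_lt_of_mem_convexHull (Set.forall_mem_image.2 hgl) hql
  linarith

end Lift

section Multilinear

/-- The vector of the products `∏ j ∈ S i, (1 - z j)` for the indicator vector `z` of a finite set:
its `i`-th entry tells whether that set misses `S i`. -/
def disjointVector {I J : Type*} [DecidableEq J] (S : I → Finset J) (Z : Finset J) : I → ℝ :=
  fun i => if Disjoint (S i) Z then 1 else 0

lemma simultaneousExchange_fiber_disjointVector {I J : Type*} [DecidableEq J] {S : I → Finset J}
    (hS : ∀ a b, (S a ∩ S b).Nonempty → ∃ c, S a ∩ S b = S c) (Z : Finset J) :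
    SimultaneousExchange (disjointVector S ⁻¹' {disjointVector S Z}) := by
  convert simultaneousExchange_setOf_disjoint_iff hS fun a => Disjoint (S a) Z using 1
  ext X
  simp only [Set.mem_preimage, Set.mem_singleton_iff, funext_iff, disjointVector, Set.mem_ofPred_eq]
  grind

lemma prod_one_sub_ite_mem {J R : Type*} [DecidableEq J] [CommRing R] (s Z : Finset J) :
    ∏ j ∈ s, (1 - if j ∈ Z then 1 else 0 : R) = if Disjoint s Z then 1 else 0 := by
  split_ifs with h
  · exact prod_eq_one fun j hj => by simp [disjoint_left.1 h hj]
  · obtain ⟨j, hjs, hjZ⟩ := not_disjoint_iff.1 h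
    exact prod_eq_zero hjs (by simp [hjZ])

lemma Xset_eq_image_liftedPoint (n m l u : ℕ) (S : Fin m → Finset (Fin n)) :
    Xset n m l u S = liftedPoint (disjointVector S) '' {Z | l ≤ #Z ∧ #Z ≤ u} := by
  ext ⟨z, d⟩
  constructor
  · rintro ⟨hz, -, hd, hl, hu⟩
    obtain ⟨Z, rfl⟩ : ∃ Z : Finset (Fin n), z = fun j => if j ∈ Z then 1 else 0 :=
      ⟨univ.filter fun j => z j = 1, by grind⟩
    obtain rfl : d = disjointVector S Z :=
      funext fun i => (hd i).trans (prod_one_sub_ite_mem (S i) Z)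
    exact ⟨Z, by simpa using And.intro hl hu, rfl⟩
  · rintro ⟨Z, ⟨hl, hu⟩, hZ⟩
    obtain ⟨rfl, rfl⟩ := Prod.mk.inj hZ
    refine ⟨?_, ?_, fun i => (prod_one_sub_ite_mem (S i) Z).symm, ?_⟩
    · grind
    · grind [disjointVector]
    · simpa using And.intro hl hu

lemma Dset_eq_range_disjointVector (n m : ℕ) (S : Fin m → Finset (Fin n)) :
    Dset n m 0 n S = Set.range (disjointVector S) := by
  simp [Dset, Xset_eq_image_liftedPoint, card_finset_fin_le, ← Set.range_comp,
    Function.comp_def, liftedPoint]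

theorem stmt5_general (n m l u : ℕ) (S : Fin m → Finset (Fin n)) (hlu : l ≤ u)
    (hS : ClosedInter n m S)
    (hΔ : AffineIndependent ℝ ((↑) : Dset n m 0 n S → Fin m → ℝ)) :
    convexHull ℝ (Xset n m l u S) =
      convexHull ℝ (Xset n m 0 u S) ∩ convexHull ℝ (Xset n m l n S) := by
  rw [Dset_eq_range_disjointVector] at hΔ
  have h := convexHull_liftedPoint_eq_inter hΔ (simultaneousExchange_fiber_disjointVector hS) hlu
  simpa [Xset_eq_image_liftedPoint, card_finset_fin_le] using h

end Multilinear

theorem stmt5 (n m l u : ℕ) (S : Fin m → Finset (Fin n))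
    (hn : 0 < n) (hm : 0 < m) (hlu : l ≤ u) (hu : 2 ≤ u)
    (hdist : Function.Injective S)
    (hcard : ∀ i, 1 ≤ (S i).card ∧ (S i).card ≤ n - l)
    (hproper : ProperFam n m l u S)
    (hD : Dset n m l u S = Dset n m 0 n S) :
    convexHull ℝ (Xset n m l u S) =
      convexHull ℝ (Xset n m 0 u S) ∩ convexHull ℝ (Xset n m l n S) := by
  obtain ⟨hS, D, hDl, -, hind⟩ := hproper
  exact stmt5_general n m l u S hlu hS (hD ▸ hDl ▸ hind)
end
end

section
/- The polytope conv(X^{l,u}) is full-dimensional; that is, the affine span of X^{l,u} is all of R^{n+m}. -/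
open Finset

noncomputable section

/-!
A cardinality-feasible set `T` that meets every `S i` has `δ = 0`. Given a coordinate `j`, the
smallest member of the chain has an element other than `j`, so some such `T` avoids `j` and can be
enlarged by `j` within the cardinality bounds; the difference of the two points is the unit vector
of `z j`, so the direction space contains the whole `z`-space. Modulo the `z`-space only the
`δ`-parts matter: a feasible set that is disjoint from `S i` but meets all larger members of the
chain has `δ i = 1` and `δ k = 0` for `k > i`, and vectors of this triangular shape generate the
`δ`-space.
-/

section Triangular

variable {ι κ R : Type*} [Finite ι] [LinearOrder ι] [Finite κ] [LinearOrder κ] [Ring R]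

theorem submodule_pi_eq_top_of_triangular (W : Submodule R (κ → R))
    (hW : ∀ i, ∃ d ∈ W, d i = 1 ∧ ∀ k, i < k → d k = 0) : W = ⊤ := by
  cases nonempty_fintype κ
  have single_mem : ∀ i, Pi.single i 1 ∈ W := by
    intro i
    induction i using WellFoundedLT.induction with
    | ind i ih =>
      obtain ⟨d, hdW, hdi, hd⟩ := hW i
      have single_eq : Pi.single i 1 = d - ∑ k with k < i, d k • Pi.single k (1 : R) := by
        ext a
        rcases lt_trichotomy a i with ha | rfl | ha
        · simp [Pi.single_apply, ha, ha.ne]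
        · simp [Pi.single_apply, hdi]
        · simp [Pi.single_apply, hd a ha, ha.ne', ha.not_gt]
      rw [single_eq]
      exact W.sub_mem hdW (W.sum_mem fun k hk ↦ W.smul_mem _ (ih k ((mem_filter_univ k).1 hk)))
  refine eq_top_iff.2 fun d _ ↦ ?_
  rw [pi_eq_sum_univ' d]
  exact W.sum_mem fun i _ ↦ W.smul_mem _ (single_mem i)

theorem submodule_prod_eq_top_of_triangular (V : Submodule R ((ι → R) × (κ → R)))
    (hfst : ∀ j, (Pi.single j 1, 0) ∈ V)
    (hsnd : ∀ i, ∃ p ∈ V, p.2 i = 1 ∧ ∀ k, i < k → p.2 k = 0) : V = ⊤ := by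
  have comap_inl : V.comap (LinearMap.inl R (ι → R) (κ → R)) = ⊤ :=
    submodule_pi_eq_top_of_triangular _ fun j ↦
      ⟨Pi.single j 1, hfst j, by simp, fun k hk ↦ Pi.single_eq_of_ne hk.ne' 1⟩
  have map_snd : V.map (LinearMap.snd R (ι → R) (κ → R)) = ⊤ :=
    submodule_pi_eq_top_of_triangular _ fun i ↦
      let ⟨p, hpV, hp⟩ := hsnd i
      ⟨p.2, ⟨p, hpV, rfl⟩, hp⟩
  have ker_le : LinearMap.ker (LinearMap.snd R (ι → R) (κ → R)) ≤ V := by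
    rw [LinearMap.ker_snd]
    exact LinearMap.range_le_iff_comap.2 comap_inl
  rw [← Submodule.comap_map_eq_self ker_le, map_snd, Submodule.comap_top]

end Triangular

section SetSystems

variable {α κ : Type*} [Fintype α]

theorem exists_superset_disjoint_card_eq {A B : Finset α} {r : ℕ} (hAB : Disjoint A B)
    (hA : #A ≤ r) (hB : #B + r ≤ Fintype.card α) : ∃ T, A ⊆ T ∧ Disjoint B T ∧ #T = r := by
  classical
  obtain ⟨T, hAT, hTB, hT⟩ := exists_subsuperset_card_eq (subset_compl_iff_disjoint_right.2 hAB) hA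
    (by rw [card_compl]; omega)
  exact ⟨T, hAT, (subset_compl_iff_disjoint_right.1 hTB).symm, hT⟩

theorem exists_notMem_meets_all_card_eq {S : κ → Finset α} {A : Finset α} (hA : A.Nontrivial)
    (hAS : ∀ i, A ⊆ S i) (j : α) {r : ℕ} (hr : 1 ≤ r) (hrα : r < Fintype.card α) :
    ∃ T : Finset α, j ∉ T ∧ #T = r ∧ ∀ i, ¬ Disjoint (S i) T := by
  obtain ⟨a, haA, haj⟩ := hA.exists_ne j
  obtain ⟨T, haT, hjT, hT⟩ := exists_superset_disjoint_card_eq (A := {a}) (B := {j}) (r := r)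
    (by simpa using haj) (by simpa using hr) (by simpa [add_comm] using hrα)
  exact ⟨T, disjoint_singleton_left.1 hjT, hT, fun i ↦
    not_disjoint_iff.2 ⟨a, hAS i haA, singleton_subset_iff.1 haT⟩⟩

theorem exists_disjoint_meets_Ioi_of_strictMono [LinearOrder κ] [SuccOrder κ] {S : κ → Finset α}
    (hS : StrictMono S) {l u : ℕ} (hlu : l ≤ u) (hu : 1 ≤ u) {i : κ}
    (hi : #(S i) + l ≤ Fintype.card α) :
    ∃ T : Finset α, l ≤ #T ∧ #T ≤ u ∧ Disjoint (S i) T ∧ ∀ k, i < k → ¬ Disjoint (S k) T := by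
  by_cases hmax : IsMax i
  · obtain ⟨T, -, hST, hT⟩ := exists_superset_disjoint_card_eq (disjoint_empty_left (S i))
      (Nat.zero_le l) hi
    exact ⟨T, hT.ge, hT.trans_le hlu, hST, fun k hk ↦ (hmax.not_lt hk).elim⟩
  · obtain ⟨c, hc, hci⟩ := exists_of_ssubset (hS (Order.lt_succ_of_not_isMax hmax))
    have hlt : #(S i) < Fintype.card α := card_lt_univ_of_notMem hci
    obtain ⟨T, hcT, hST, hT⟩ := exists_superset_disjoint_card_eq (r := max l 1)
      (disjoint_singleton_left.2 hci) (by simp) (by omega)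
    exact ⟨T, by omega, by omega, hST, fun k hk ↦ not_disjoint_iff.2
      ⟨c, hS.monotone (Order.succ_le_of_lt hk) hc, singleton_subset_iff.1 hcT⟩⟩

end SetSystems

section Vertices

/-- The point of the multilinear set over the `0/1` vector with support `T`. As `δ i` is the product
of the `1 - z j` over `S i`, it is `1` exactly when `S i` and `T` are disjoint. -/
def supportPoint {α κ : Type*} [DecidableEq α] (S : κ → Finset α) (T : Finset α) :
    (α → ℝ) × (κ → ℝ) :=
  (fun j ↦ if j ∈ T then 1 else 0, fun i ↦ if Disjoint (S i) T then 1 else 0)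

theorem supportPoint_insert_sub {α κ : Type*} [DecidableEq α] {S : κ → Finset α} {T : Finset α}
    {j : α} (hj : j ∉ T) (hT : ∀ i, ¬ Disjoint (S i) T) :
    supportPoint S (insert j T) - supportPoint S T = (Pi.single j 1, 0) := by
  have hjT : ∀ i, ¬ Disjoint (S i) (insert j T) := fun i h ↦
    hT i (h.mono_right (subset_insert j T))
  ext a
  · by_cases haj : a = j <;> simp [supportPoint, haj, hj]
  · simp [supportPoint, hT, hjT]

variable {n m l u : ℕ} {S : Fin m → Finset (Fin n)}

theorem supportPoint_mem_Xset {T : Finset (Fin n)} (hl : l ≤ #T) (hu : #T ≤ u) :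
    supportPoint S T ∈ Xset n m l u S := by
  refine ⟨fun j ↦ ?_, fun i ↦ ?_, fun i ↦ ?_, ?_, ?_⟩
  · exact (ite_eq_or_eq _ 1 0).symm
  · exact (ite_eq_or_eq _ 1 0).symm
  · have one_sub_ite (j : Fin n) : 1 - (if j ∈ T then 1 else 0 : ℝ) = if j ∉ T then 1 else 0 := by
      split_ifs <;> simp_all
    simp only [supportPoint, one_sub_ite, prod_ite_zero, prod_const_one, disjoint_left]
  · simpa [supportPoint] using hl
  · simpa [supportPoint] using hu

theorem affineSpan_Xset_eq_top_of_triangular (hn : 0 < n)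
    (meets_all : ∀ j, ∃ T : Finset (Fin n), j ∉ T ∧ l ≤ #T ∧ #T < u ∧ ∀ i, ¬ Disjoint (S i) T)
    (triangular : ∀ i, ∃ T : Finset (Fin n), l ≤ #T ∧ #T ≤ u ∧ Disjoint (S i) T ∧
      ∀ k, i < k → ¬ Disjoint (S k) T) :
    affineSpan ℝ (Xset n m l u S) = ⊤ := by
  obtain ⟨T₀, -, hl₀, hu₀, hT₀⟩ := meets_all ⟨0, hn⟩
  have mem_X₀ : supportPoint S T₀ ∈ Xset n m l u S := supportPoint_mem_Xset hl₀ hu₀.le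
  rw [AffineSubspace.affineSpan_eq_top_iff_vectorSpan_eq_top_of_nonempty ℝ _ _ ⟨_, mem_X₀⟩]
  refine submodule_prod_eq_top_of_triangular _ (fun j ↦ ?_) fun i ↦ ?_
  · obtain ⟨T, hj, hl, hu, hT⟩ := meets_all j
    have card_insert : #(insert j T) = #T + 1 := card_insert_of_notMem hj
    rw [← supportPoint_insert_sub hj hT]
    exact vsub_mem_vectorSpan ℝ (supportPoint_mem_Xset (by omega) (by omega))
      (supportPoint_mem_Xset hl hu.le)
  · obtain ⟨T, hl, hu, hi, hT⟩ := triangular i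
    refine ⟨supportPoint S T - supportPoint S T₀,
      vsub_mem_vectorSpan ℝ (supportPoint_mem_Xset hl hu) mem_X₀, ?_, fun k hk ↦ ?_⟩
    · simp [supportPoint, hi, hT₀]
    · simp [supportPoint, hT k hk, hT₀]

end Vertices

theorem stmt6 (n m l u : ℕ) (S : Fin m → Finset (Fin n))
    (hn : 0 < n) (hm : 0 < m) (hu : 2 ≤ u) (hlu : l < u)
    (hnested : ∀ i j : Fin m, i < j → S i ⊂ S j)
    (hS1 : 2 ≤ (SS n m S 1).card)
    (hSm : l ≤ n - (SS n m S m).card)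
    :
    affineSpan ℝ (Xset n m l u S) = ⊤ := by
  have hS : StrictMono S := fun i j hij ↦ hnested i j hij
  have SS_one : SS n m S 1 = S ⟨0, hm⟩ := dif_pos ⟨le_rfl, hm⟩
  have SS_m : SS n m S m = S ⟨m - 1, by omega⟩ := dif_pos ⟨hm, le_rfl⟩
  have SS_one_subset (i : Fin m) : SS n m S 1 ⊆ S i :=
    SS_one ▸ hS.monotone (Fin.mk_le_of_le_val i.1.zero_le)
  have card_add_le (i : Fin m) : #(S i) + l ≤ n := by
    have subset_SS_m : S i ⊆ SS n m S m := SS_m ▸ hS.monotone (Fin.le_def.2 (by grind))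
    have card_le : #(S i) ≤ #(SS n m S m) := card_le_card subset_SS_m
    have card_SS_m_le : #(SS n m S m) ≤ n := card_finset_fin_le _
    omega
  have two_add_le : 2 + l ≤ n :=
    (Nat.add_le_add_right (hS1.trans_eq (congrArg card SS_one)) l).trans (card_add_le _)
  refine affineSpan_Xset_eq_top_of_triangular hn (fun j ↦ ?_) fun i ↦
    exists_disjoint_meets_Ioi_of_strictMono hS hlu.le (by omega) (by simpa using card_add_le i)
  obtain ⟨T, hj, hT, hTS⟩ := exists_notMem_meets_all_card_eq
    (one_lt_card_iff_nontrivial.1 hS1) SS_one_subset j (le_max_right l 1)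
    (by rw [Fintype.card_fin]; omega)
  exact ⟨T, hj, by omega, by omega, hTS⟩
end
end
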